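/- arXiv:2010.03981 — 3 statements merged into one kernel-verified Lean document; each statement's English description precedes it below -/
import Mathlib

section
/- Let T = CP(n; n_1, …, n_k) ∈ C(n,k) be a caterpillar tree with respect to the path P_k = v_1⋯v_k, where 2 ≤ k ≤ n − 1. Then T ⪯ CP_{n;⌊(n−k)/2⌋,⌈(n−k)/2⌉}, and r(T) = r(CP_{n;⌊(n−k)/2⌋,⌈(n−k)/2⌉}) if and only if T is isomorphic to CP_{n;⌊(n−k)/2⌋,⌈(n−k)/2⌉}. -/
namespace TreeOrder

attribute [local instance] Classical.propDecidable

variable {V : Type*} {W : Type*}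

/-- `side G u v` = number of vertices strictly closer to `u` than to `v`;
for an edge `uv` of a tree this is the order of the component of `T - uv` containing `u`. -/
noncomputable def side [Fintype V] (G : SimpleGraph V) (u v : V) : ℕ :=
  (Finset.univ.filter fun w => G.dist w u < G.dist w v).card

/-- `mu G u v = min (n_u(e), n_v(e))` for the edge `e = uv`. -/
noncomputable def mu [Fintype V] (G : SimpleGraph V) (u v : V) : ℕ :=
  min (side G u v) (side G v u)

/-- `mu` as a function on unordered pairs. -/
noncomputable def muE [Fintype V] (G : SimpleGraph V) : Sym2 V → ℕ :=
  Sym2.lift ⟨fun u v => mu G u v, fun _ _ => min_comm _ _⟩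

/-- `r G i` = number of edges `e` of `G` with `μ(e) = i`. -/
noncomputable def r [Fintype V] (G : SimpleGraph V) (i : ℕ) : ℕ :=
  (Finset.univ.filter fun e : Sym2 V => e ∈ G.edgeSet ∧ muE G e = i).card

/-- `tailSum G n k = Σ_{i=k}^{⌊n/2⌋} r_i(G)`. -/
noncomputable def tailSum [Fintype V] (G : SimpleGraph V) (n k : ℕ) : ℕ :=
  ∑ i ∈ Finset.Icc k (n / 2), r G i

/-- The order `⪯` on trees with `n` vertices, via edge division vectors. -/
def Preceq [Fintype V] [Fintype W] (n : ℕ) (G : SimpleGraph V) (H : SimpleGraph W) : Prop :=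
  ∀ k, 1 ≤ k → k ≤ n / 2 → tailSum G n k ≤ tailSum H n k

/-- The strict order `≺`. -/
def Prec [Fintype V] [Fintype W] (n : ℕ) (G : SimpleGraph V) (H : SimpleGraph W) : Prop :=
  Preceq n G H ∧ ∃ k, 1 ≤ k ∧ k ≤ n / 2 ∧ tailSum G n k < tailSum H n k

/-- Equality of edge division vectors `r(G) = r(H)`. -/
def SameEdgeDivision [Fintype V] [Fintype W] (n : ℕ) (G : SimpleGraph V)
    (H : SimpleGraph W) : Prop :=
  ∀ i, 1 ≤ i → i ≤ n / 2 → r G i = r H i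

/-- `u` is a centroidal vertex: `n_u(e) ≥ n/2` for every edge `e` incident to `u`. -/
def IsCentroidal [Fintype V] (G : SimpleGraph V) (u : V) : Prop :=
  ∀ v, G.Adj u v → Fintype.card V ≤ 2 * side G u v

/-- `u` is a proper centroidal vertex: `n_u(e) > ⌈n/2⌉` for every edge `e` incident to `u`. -/
def IsProperCentroidal [Fintype V] (G : SimpleGraph V) (u : V) : Prop :=
  ∀ v, G.Adj u v → (Fintype.card V + 1) / 2 < side G u v

/-- The edge `uv` is a center edge: `μ(uv) = ⌊n/2⌋`. -/
def IsCenterEdge [Fintype V] (G : SimpleGraph V) (u v : V) : Prop :=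
  G.Adj u v ∧ mu G u v = Fintype.card V / 2

/-- degree of a vertex -/
noncomputable def deg [Fintype V] (G : SimpleGraph V) (v : V) : ℕ :=
  (Finset.univ.filter fun w => G.Adj v w).card

/-- The path `P_n` on `n` vertices. -/
def pathG (n : ℕ) : SimpleGraph (Fin n) :=
  SimpleGraph.fromRel fun x y => (x : ℕ) + 1 = y

/-- The star `S_n` on `n` vertices. -/
def starG (n : ℕ) : SimpleGraph (Fin n) :=
  SimpleGraph.fromRel fun x _ => (x : ℕ) = 0

/-- The double star path `CP_{n;a,b}` : a path on `n - a - b` vertices (at positions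
`a, …, n - b - 1`) with `a` pendent vertices attached to its first vertex and `b`
pendent vertices attached to its last vertex. -/
def doubleStar (n a b : ℕ) : SimpleGraph (Fin n) :=
  SimpleGraph.fromRel fun x y =>
    ((x : ℕ) < a ∧ (y : ℕ) = a) ∨
    (a ≤ (x : ℕ) ∧ (x : ℕ) + 1 = y ∧ (y : ℕ) < n - b) ∨
    ((x : ℕ) = n - b - 1 ∧ n - b ≤ (y : ℕ))

/-- `CP_{n,k}^s` : a path `v_1 ⋯ v_k` (at positions `0, …, k-1`) with all
`n - k` pendent vertices attached to `v_s` (position `s - 1`). -/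
def cpOne (n k s : ℕ) : SimpleGraph (Fin n) :=
  SimpleGraph.fromRel fun x y =>
    ((x : ℕ) + 1 = y ∧ (y : ℕ) < k) ∨ ((x : ℕ) = s - 1 ∧ k ≤ (y : ℕ))

/-- The caterpillar `CP(n; n_1, …, n_k)` : a path `v_1 ⋯ v_k` (at positions `0, …, k-1`),
where pendent vertex `j` (for `k ≤ j < n`) is attached to the path vertex at
position `f j` (so `n_i = |{j : f j = i - 1}|`). -/
def caterpillar (n k : ℕ) (f : ℕ → ℕ) : SimpleGraph (Fin n) :=
  SimpleGraph.fromRel fun x y =>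
    ((x : ℕ) + 1 = y ∧ (y : ℕ) < k) ∨ (k ≤ (y : ℕ) ∧ (x : ℕ) = f y)

/-- The balanced starlike tree `SP_{n,q}` : the center is vertex `0`, and vertex
`j ≥ 1` lies on branch `(j - 1) % q` at depth `(j - 1)/q + 1`; so the `q` branches are
paths whose orders pairwise differ by at most `1`. -/
def balancedStar (n q : ℕ) : SimpleGraph (Fin n) :=
  SimpleGraph.fromRel fun x y =>
    ((x : ℕ) = 0 ∧ 1 ≤ (y : ℕ) ∧ (y : ℕ) ≤ q) ∨ (1 ≤ (x : ℕ) ∧ (x : ℕ) + q = y)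

/-- The edge-moving transformation of `G` w.r.t. the edge `uv`: contract `uv` to `u`
(moving all edges at `v` to `u`) and attach `v` to `u` as a pendent vertex. -/
def edgeMove (G : SimpleGraph V) (u v : V) : SimpleGraph V :=
  SimpleGraph.fromRel fun x y =>
    (G.Adj x y ∧ x ≠ v ∧ y ≠ v) ∨ (x = u ∧ y = v) ∨ (x = u ∧ G.Adj v y ∧ y ≠ u)

section EdgeDivision

open Finset

theorem dist_add_one_le_length_of_unique_crossing {G : SimpleGraph V} (hG : G.Connected) {u v : V}
    {D : Set V} (hcut : ∀ x y, x ∉ D → y ∈ D → G.Adj x y → x = u ∧ y = v) :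
    ∀ {w x : V} (p : G.Walk w x), w ∉ D → x ∈ D → G.dist w u + 1 ≤ p.length := by
  intro w x p
  induction p with
  | nil => intro hw hx; exact absurd hx hw
  | @cons a b c h q ih =>
    intro ha hc
    rw [SimpleGraph.Walk.length_cons]
    by_cases hb : b ∈ D
    · obtain ⟨rfl, -⟩ := hcut a b ha hb h
      simp
    · have h1 := ih hb hc
      have h2 : G.dist a u ≤ G.dist a b + G.dist b u := hG.dist_triangle
      have h3 : G.dist a b = 1 := SimpleGraph.dist_eq_one_iff_adj.2 h
      omega

theorem dist_lt_dist_of_unique_crossing {G : SimpleGraph V} (hG : G.Connected) {u v : V}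
    {D : Set V} (hcut : ∀ x y, x ∉ D → y ∈ D → G.Adj x y → x = u ∧ y = v) (hv : v ∈ D) {w : V}
    (hw : w ∉ D) : G.dist w u < G.dist w v := by
  obtain ⟨p, hp⟩ := hG.exists_walk_length_eq_dist w v
  have := dist_add_one_le_length_of_unique_crossing hG hcut p hw hv
  omega

theorem mu_of_unique_crossing [Fintype V] {G : SimpleGraph V} (hG : G.Connected) {u v : V}
    (D : Finset V) (hu : u ∉ D) (hv : v ∈ D)
    (hcut : ∀ x y, x ∉ D → y ∈ D → G.Adj x y → x = u ∧ y = v) :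
    mu G u v = min #D (Fintype.card V - #D) := by
  have h1 : ∀ w, w ∉ D → G.dist w u < G.dist w v := fun w hw =>
    dist_lt_dist_of_unique_crossing (D := (D : Set V)) hG (by simpa using hcut)
      (by simpa using hv) (by simpa using hw)
  have h2 : ∀ w, w ∈ D → G.dist w v < G.dist w u := fun w hw =>
    dist_lt_dist_of_unique_crossing (D := (D : Set V)ᶜ) hG
      (fun x y hx hy h => (hcut y x (by simpa using hy) (by simpa using hx) h.symm).symm)
      (by simpa using hu) (by simpa using hw)
  have h3 : side G u v = #Dᶜ := by
    unfold side
    congr 1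
    ext w
    simp only [mem_filter, mem_univ, true_and, mem_compl]
    exact ⟨fun h hw => absurd h (h2 w hw).not_gt, h1 w⟩
  have h4 : side G v u = #D := by
    unfold side
    congr 1
    ext w
    simp only [mem_filter, mem_univ, true_and]
    exact ⟨fun h => by_contra fun hw => absurd h (h1 w hw).not_gt, h2 w⟩
  rw [mu, h3, h4, card_compl, min_comm]

theorem dist_iso_apply {G : SimpleGraph V} {H : SimpleGraph W} (e : G ≃g H) (x y : V) :
    H.dist (e x) (e y) = G.dist x y := by
  have key : ∀ z : ℕ, z ∈ (Set.range (SimpleGraph.Walk.length : H.Walk (e x) (e y) → ℕ)) ↔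
      z ∈ (Set.range (SimpleGraph.Walk.length : G.Walk x y → ℕ)) := by
    intro z
    constructor
    · rintro ⟨p, rfl⟩
      exact ⟨(p.map e.symm.toHom).copy (e.symm_apply_apply x) (e.symm_apply_apply y), by simp⟩
    · rintro ⟨p, rfl⟩
      exact ⟨p.map e.toHom, SimpleGraph.Walk.length_map e.toHom p⟩
  rw [SimpleGraph.dist_eq_sInf, SimpleGraph.dist_eq_sInf, Set.ext key]

theorem muE_map_iso [Fintype V] [Fintype W] {G : SimpleGraph V} {H : SimpleGraph W} (e : G ≃g H)
    (z : Sym2 V) : muE H (z.map e) = muE G z := by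
  have hs : ∀ u v, side H (e u) (e v) = side G u v := by
    intro u v
    unfold side
    symm
    refine card_bij (fun w _ => e w) ?_ (fun _ _ _ _ h => e.injective h) ?_
    · intro w hw
      simpa [dist_iso_apply] using hw
    · intro w hw
      refine ⟨e.symm w, ?_, e.apply_symm_apply w⟩
      have h := dist_iso_apply e (e.symm w)
      simp only [RelIso.apply_symm_apply] at h
      simpa [← h] using hw
  induction z with
  | _ x y =>
    change min (side H (e x) (e y)) (side H (e y) (e x)) = min (side G x y) (side G y x)
    rw [hs, hs]

theorem r_eq_of_iso [Fintype V] [Fintype W] {G : SimpleGraph V} {H : SimpleGraph W} (e : G ≃g H)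
    (i : ℕ) : r G i = r H i := by
  unfold r
  refine card_bij (fun z _ => z.map e) ?_
    (fun _ _ _ _ h => Sym2.map.injective e.injective h) ?_
  · intro z hz
    simp only [mem_filter, mem_univ, true_and, muE_map_iso] at hz ⊢
    refine ⟨?_, hz.2⟩
    have h1 := hz.1
    induction z with
    | _ x y => exact e.map_adj_iff.2 h1
  · intro z hz
    simp only [mem_filter, mem_univ, true_and] at hz
    have hmap : (z.map e.symm).map e = z := by
      induction z with
      | _ x y => simp
    refine ⟨z.map e.symm, ?_, hmap⟩
    simp only [mem_filter, mem_univ, true_and]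
    refine ⟨?_, by rw [← muE_map_iso e, hmap, hz.2]⟩
    have h1 := hz.1
    clear hmap
    induction z with
    | _ x y => exact e.symm.map_adj_iff.2 h1

end EdgeDivision

section Caterpillar

open Finset

variable {n k : ℕ} {f g : ℕ → ℕ}

/-- The position on the spine of the spine vertex nearest to the vertex `j`. -/
def spinePos (k : ℕ) (f : ℕ → ℕ) (j : ℕ) : ℕ := if j < k then j else f j

/-- The neighbour of the vertex `y ≥ 1` on its way to the vertex `0`. -/
def parent (k : ℕ) (f : ℕ → ℕ) (y : ℕ) : ℕ := if y < k then y - 1 else f y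

/-- The number of vertices on the far side of the spine edge from `y - 1` to `y`. -/
noncomputable def weightRight (n k : ℕ) (f : ℕ → ℕ) (y : ℕ) : ℕ :=
  #{j ∈ range n | y ≤ spinePos k f j}

/-- The value of `μ` on the edge from `y` to its parent. -/
noncomputable def edgeWeight (n k : ℕ) (f : ℕ → ℕ) (y : ℕ) : ℕ :=
  if y < k then min (weightRight n k f y) (n - weightRight n k f y) else 1

theorem parent_lt (hf : ∀ j, k ≤ j → j < n → f j < k) {y : ℕ} (hy : 1 ≤ y)
    (hyn : y < n) : parent k f y < y := by
  have := hf y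
  unfold parent
  split_ifs <;> omega

theorem caterpillar_adj (hf : ∀ j, k ≤ j → j < n → f j < k) (x y : Fin n) :
    (caterpillar n k f).Adj x y ↔
      (1 ≤ (y : ℕ) ∧ (x : ℕ) = parent k f y) ∨ (1 ≤ (x : ℕ) ∧ (y : ℕ) = parent k f x) := by
  have := hf x
  have := hf y
  simp only [caterpillar, SimpleGraph.fromRel_adj, ne_eq, Fin.ext_iff, parent]
  split_ifs <;> omega

theorem caterpillar_connected (hk : 2 ≤ k) (hkn : k ≤ n - 1)
    (hf : ∀ j, k ≤ j → j < n → f j < k) : (caterpillar n k f).Connected := by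
  have hn : 0 < n := by omega
  have key : ∀ m (hm : m < n), (caterpillar n k f).Reachable ⟨0, hn⟩ ⟨m, hm⟩ := by
    intro m
    induction m using Nat.strong_induction_on with
    | _ m ih =>
      intro hm
      rcases Nat.eq_zero_or_pos m with rfl | hpos
      · exact SimpleGraph.Reachable.refl _
      · have hlt := parent_lt hf hpos hm
        refine (ih _ hlt (hlt.trans hm)).trans (SimpleGraph.Adj.reachable ?_)
        rw [caterpillar_adj hf]
        exact Or.inl ⟨hpos, rfl⟩
  have : Nonempty (Fin n) := ⟨⟨0, hn⟩⟩
  exact SimpleGraph.Connected.mk fun x y => (key x x.2).symm.trans (key y y.2)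

theorem card_filter_fin (n : ℕ) (p : ℕ → Prop) [DecidablePred p] :
    #{w : Fin n | p w} = #{j ∈ range n | p j} := by
  refine card_bij (fun w _ => (w : ℕ)) ?_ (fun _ _ _ _ h => Fin.ext h) ?_
  · intro w hw
    simpa using hw
  · intro j hj
    simp only [mem_filter, mem_range] at hj
    exact ⟨⟨j, hj.1⟩, by simpa using hj.2, rfl⟩

theorem mu_caterpillar (hk : 2 ≤ k) (hkn : k ≤ n - 1) (hf : ∀ j, k ≤ j → j < n → f j < k)
    (x y : Fin n) (hy : 1 ≤ (y : ℕ)) (hx : (x : ℕ) = parent k f y) :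
    mu (caterpillar n k f) x y = edgeWeight n k f y := by
  have hconn := caterpillar_connected hk hkn hf
  unfold edgeWeight
  split_ifs with hyk
  · obtain ⟨D, hD, hcard⟩ : ∃ D : Finset (Fin n), (∀ w, w ∈ D ↔ (y : ℕ) ≤ spinePos k f w) ∧
        #D = weightRight n k f y :=
      ⟨univ.filter fun w => (y : ℕ) ≤ spinePos k f w, by simp,
        by unfold weightRight; convert card_filter_fin n fun j => (y : ℕ) ≤ spinePos k f j⟩
    rw [mu_of_unique_crossing hconn D, Fintype.card_fin, hcard]
    · rw [hD]
      unfold spinePos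
      unfold parent at hx
      split_ifs at hx ⊢ <;> omega
    · simp [hD, spinePos, hyk]
    · intro a b ha hb hab
      rw [caterpillar_adj hf] at hab
      have := hf a
      have := hf b
      simp only [hD, spinePos] at ha hb
      simp only [Fin.ext_iff]
      unfold parent at hab hx
      split_ifs at * <;> omega
  · rw [mu_of_unique_crossing hconn {y}, Fintype.card_fin, card_singleton]
    · omega
    · have := parent_lt hf hy y.2
      simp only [mem_singleton, Fin.ext_iff]
      omega
    · simp
    · intro a b ha hb hab
      rw [caterpillar_adj hf] at hab
      obtain rfl : b = y := by simpa using hb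
      refine ⟨Fin.ext ?_, rfl⟩
      rcases hab with ⟨-, h⟩ | ⟨-, h⟩
      · exact h.trans hx.symm
      · have := hf a
        unfold parent at h
        split_ifs at h <;> omega

theorem r_caterpillar (hk : 2 ≤ k) (hkn : k ≤ n - 1) (hf : ∀ j, k ≤ j → j < n → f j < k)
    (i : ℕ) : r (caterpillar n k f) i = #{y ∈ Ico 1 n | edgeWeight n k f y = i} := by
  have hlt : ∀ y ∈ ({y ∈ Ico 1 n | edgeWeight n k f y = i} : Finset ℕ),
      parent k f y < y ∧ y < n := by
    intro y hy
    simp only [mem_filter, mem_Ico] at hy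
    exact ⟨parent_lt hf hy.1.1 hy.1.2, hy.1.2⟩
  symm
  refine card_bij (fun y hy => s(⟨parent k f y, (hlt y hy).1.trans (hlt y hy).2⟩,
    ⟨y, (hlt y hy).2⟩)) ?_ ?_ ?_
  · intro y hy
    have hy' := hy
    simp only [mem_filter, mem_Ico] at hy'
    simp only [mem_filter, mem_univ, true_and, SimpleGraph.mem_edgeSet]
    refine ⟨(caterpillar_adj hf _ _).2 (Or.inl ⟨hy'.1.1, rfl⟩), ?_⟩
    exact (mu_caterpillar hk hkn hf _ _ hy'.1.1 rfl).trans hy'.2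
  · intro y hy z hz h
    have h1 := hlt y hy
    have h2 := hlt z hz
    simp only [Sym2.eq_iff, Fin.mk.injEq] at h
    omega
  · intro z hz
    have key : ∀ x y : Fin n, 1 ≤ (y : ℕ) → (x : ℕ) = parent k f y →
        muE (caterpillar n k f) s(x, y) = i →
        ∃ a, ∃ ha : a ∈ ({y ∈ Ico 1 n | edgeWeight n k f y = i} : Finset ℕ),
          s((⟨parent k f a, (hlt a ha).1.trans (hlt a ha).2⟩ : Fin n), ⟨a, (hlt a ha).2⟩)
            = s(x, y) := by
      intro x y hy hx h
      have h' : edgeWeight n k f y = i := (mu_caterpillar hk hkn hf x y hy hx).symm.trans h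
      refine ⟨y, by simp [h', hy], ?_⟩
      simp [← hx]
    simp only [mem_filter, mem_univ, true_and] at hz
    induction z with
    | _ x y =>
      rw [SimpleGraph.mem_edgeSet, caterpillar_adj hf] at hz
      rcases hz.1 with ⟨h1, h2⟩ | ⟨h1, h2⟩
      · exact key x y h1 h2 hz.2
      · rw [Sym2.eq_swap]
        exact key y x h1 h2 (by rw [Sym2.eq_swap]; exact hz.2)

theorem card_filter_Ico_split {l m n : ℕ} (hlm : l ≤ m) (hmn : m ≤ n) (p : ℕ → Prop)
    [DecidablePred p] :
    #{j ∈ Ico l n | p j} = #{j ∈ Ico l m | p j} + #{j ∈ Ico m n | p j} := by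
  rw [← Ico_union_Ico_eq_Ico hlm hmn, filter_union,
    card_union_of_disjoint (disjoint_filter_filter (Ico_disjoint_Ico_consecutive l m n))]

theorem caterpillar_iso_of_card_fiber (hkn : k ≤ n) (hf : ∀ j, k ≤ j → j < n → f j < k)
    (hg : ∀ j, k ≤ j → j < n → g j < k)
    (h : ∀ p, #{j ∈ Ico k n | f j = p} = #{j ∈ Ico k n | g j = p}) :
    Nonempty (caterpillar n k f ≃g caterpillar n k g) := by
  let lab : (ℕ → ℕ) → Fin n → ℕ := fun f j => if (j : ℕ) < k then k + j else f j
  have hcard : ∀ (f : ℕ → ℕ) (p : ℕ), Fintype.card {w : Fin n // lab f w = p} =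
      #{j ∈ Ico 0 k | k + j = p} + #{j ∈ Ico k n | f j = p} := by
    intro f p
    rw [Fintype.card_subtype]
    have h1 := card_filter_fin n fun j => (if j < k then k + j else f j) = p
    rw [range_eq_Ico, card_filter_Ico_split (Nat.zero_le k) hkn] at h1
    have h2 : #{j ∈ Ico 0 k | (if j < k then k + j else f j) = p} = #{j ∈ Ico 0 k | k + j = p} := by
      congr 1
      refine filter_congr fun j hj => ?_
      rw [if_pos (mem_Ico.1 hj).2]
    have h3 : #{j ∈ Ico k n | (if j < k then k + j else f j) = p} = #{j ∈ Ico k n | f j = p} := by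
      congr 1
      refine filter_congr fun j hj => ?_
      rw [if_neg (mem_Ico.1 hj).1.not_gt]
    rw [h2, h3] at h1
    convert h1
  let e : Fin n ≃ Fin n := (Equiv.sigmaFiberEquiv (lab f)).symm.trans
    ((Equiv.sigmaCongrRight fun p =>
      Fintype.equivOfCardEq ((hcard f p).trans (by rw [h p, hcard g p]))).trans
        (Equiv.sigmaFiberEquiv (lab g)))
  have he : ∀ w, lab g (e w) = lab f w := fun w =>
    (Fintype.equivOfCardEq ((hcard f _).trans (by rw [h, hcard g])) ⟨w, rfl⟩ :
      {z : Fin n // lab g z = lab f w}).2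
  have hspine : ∀ w : Fin n, ((w : ℕ) < k ∧ (e w : ℕ) = w) ∨
      (k ≤ (w : ℕ) ∧ k ≤ (e w : ℕ) ∧ g (e w) = f w) := by
    intro w
    have h1 := he w
    have h2 := hf w
    have h3 := hg (e w)
    simp only [lab] at h1
    split_ifs at h1 <;> omega
  refine ⟨⟨e, ?_⟩⟩
  intro x y
  have hx := hspine x
  have hy := hspine y
  have h1 := hf x
  have h2 := hf y
  simp only [caterpillar, SimpleGraph.fromRel_adj, ne_eq, e.injective.eq_iff]
  omega

theorem caterpillar_iso_reverse (hkn : k ≤ n) (hf : ∀ j, k ≤ j → j < n → f j < k) :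
    Nonempty (caterpillar n k f ≃g caterpillar n k fun j => k - 1 - f j) := by
  let flip : Fin n → Fin n := fun x => ⟨if (x : ℕ) < k then k - 1 - x else x, by split_ifs <;> omega⟩
  have hval : ∀ x : Fin n, (flip x : ℕ) = if (x : ℕ) < k then k - 1 - x else x := fun _ => rfl
  have hflip : Function.Involutive flip := by
    intro x
    ext
    rw [hval, hval]
    split_ifs <;> omega
  obtain ⟨e, he⟩ : ∃ e : Fin n ≃ Fin n, ∀ x, (e x : ℕ) = if (x : ℕ) < k then k - 1 - x else x :=
    ⟨hflip.toPerm, hval⟩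
  refine ⟨⟨e, ?_⟩⟩
  intro x y
  simp only [caterpillar, SimpleGraph.fromRel_adj, ne_eq, e.injective.eq_iff]
  have h1 := hf x
  have h2 := hf y
  have h3 : x = y ↔ (x : ℕ) = y := Fin.ext_iff
  have hx := he x
  have hy := he y
  by_cases hxk : (x : ℕ) < k <;> by_cases hyk : (y : ℕ) < k <;>
    simp only [hxk, hyk, if_true, if_false] at hx hy <;> rw [hx, hy] <;> omega

theorem doubleStar_iso_caterpillar {a b : ℕ} (hk : 1 ≤ k) (hn : n = a + b + k) :
    Nonempty (doubleStar n a b ≃g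
      caterpillar n k fun j => if j < k + a then 0 else k - 1) := by
  let e : Fin n ≃ Fin n :=
    { toFun := fun x => ⟨if (x : ℕ) < a then k + x else if (x : ℕ) < a + k then x - a else x,
        by split_ifs <;> omega⟩
      invFun := fun x => ⟨if (x : ℕ) < k then x + a else if (x : ℕ) < k + a then x - k else x,
        by split_ifs <;> omega⟩
      left_inv := by
        intro x
        ext
        dsimp only
        split_ifs <;> omega
      right_inv := by
        intro x
        ext
        dsimp only
        split_ifs <;> omega }
  have hval : ∀ x : Fin n, ((x : ℕ) < a ∧ (e x : ℕ) = k + x) ∨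
      (a ≤ (x : ℕ) ∧ (x : ℕ) < a + k ∧ (e x : ℕ) = x - a) ∨
      (a + k ≤ (x : ℕ) ∧ (e x : ℕ) = x) := by
    intro x
    change ((x : ℕ) < a ∧ (if (x : ℕ) < a then k + x else if (x : ℕ) < a + k then x - a else x)
      = k + (x : ℕ)) ∨ (_ ∧ _ ∧ (if (x : ℕ) < a then k + x else if (x : ℕ) < a + k then x - a else x)
      = (x : ℕ) - a) ∨ (_ ∧ (if (x : ℕ) < a then k + x else if (x : ℕ) < a + k then x - a else x)
      = (x : ℕ))
    split_ifs <;> omega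
  clear_value e
  refine ⟨⟨e, ?_⟩⟩
  intro x y
  have hx := x.2
  have hy := y.2
  simp only [caterpillar, doubleStar, SimpleGraph.fromRel_adj, ne_eq, e.injective.eq_iff]
  have h3 : x = y ↔ (x : ℕ) = y := Fin.ext_iff
  rcases hval x with ⟨h1, h2⟩ | ⟨h1, h1', h2⟩ | ⟨h1, h2⟩ <;>
    rcases hval y with ⟨h4, h5⟩ | ⟨h4, h4', h5⟩ | ⟨h4, h5⟩ <;>
    rw [h2, h5, h3] <;> clear h2 h5 h3 <;> split_ifs <;> omega

theorem weightRight_eq (hkn : k ≤ n) (y : ℕ) :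
    weightRight n k f y = (k - y) + #{j ∈ Ico k n | y ≤ f j} := by
  have h1 : #{j ∈ Ico 0 k | y ≤ spinePos k f j} = k - y := by
    rw [← Nat.card_Ico]
    congr 1
    ext j
    rw [mem_filter, mem_Ico, mem_Ico]
    unfold spinePos
    split_ifs <;> omega
  have h2 : #{j ∈ Ico k n | y ≤ spinePos k f j} = #{j ∈ Ico k n | y ≤ f j} := by
    congr 1
    refine filter_congr fun j hj => ?_
    rw [spinePos, if_neg (mem_Ico.1 hj).1.not_gt]
  rw [weightRight, range_eq_Ico, card_filter_Ico_split (Nat.zero_le k) hkn, h1, h2]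

theorem weightRight_lt_of_lt (hkn : k ≤ n) {y z : ℕ} (hyz : y < z) (hz : z ≤ k) :
    weightRight n k f z < weightRight n k f y := by
  have h : #{j ∈ Ico k n | z ≤ f j} ≤ #{j ∈ Ico k n | y ≤ f j} :=
    card_le_card (monotone_filter_right _ fun j _ hj => hyz.le.trans hj)
  rw [weightRight_eq hkn, weightRight_eq hkn]
  omega

theorem weightRight_injOn (hkn : k ≤ n) : Set.InjOn (weightRight n k f) (Set.Iic k) := by
  intro y hy z hz h
  rcases lt_trichotomy y z with hlt | heq | hlt
  · exact absurd h (weightRight_lt_of_lt hkn hlt hz).ne'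
  · exact heq
  · exact absurd h (weightRight_lt_of_lt hkn hlt hy).ne

theorem weightRight_doubleStar {a b : ℕ} (hn : n = a + b + k) {y : ℕ} (hy : 1 ≤ y) (hyk : y < k) :
    weightRight n k (fun j => if j < k + a then 0 else k - 1) y = k - y + b := by
  rw [weightRight_eq (by omega)]
  have : #{j ∈ Ico k n | y ≤ if j < k + a then 0 else k - 1} = #(Ico (k + a) n) := by
    congr 1
    ext j
    simp only [mem_filter, mem_Ico]
    split_ifs <;> omega
  rw [this, Nat.card_Ico]
  omega

theorem edgeWeight_le_half (hn : 2 ≤ n) (y : ℕ) : edgeWeight n k f y ≤ n / 2 := by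
  unfold edgeWeight
  split_ifs <;> omega

theorem card_filter_le_edgeWeight (hn : 2 ≤ n) (s : Finset ℕ) (t : ℕ) :
    #{y ∈ s | t ≤ edgeWeight n k f y} =
      ∑ i ∈ Icc t (n / 2), #{y ∈ s | edgeWeight n k f y = i} := by
  rw [card_eq_sum_card_fiberwise (f := edgeWeight n k f) (t := Icc t (n / 2))]
  · refine sum_congr rfl fun i hi => ?_
    rw [filter_filter]
    congr 1
    refine filter_congr fun y _ => ?_
    have := (mem_Icc.1 hi).1
    constructor
    · exact And.right
    · rintro rfl
      exact ⟨this, rfl⟩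
  · intro y hy
    simp only [mem_coe, mem_filter] at hy
    simpa using ⟨hy.2, edgeWeight_le_half hn y⟩

theorem tailSum_caterpillar (hk : 2 ≤ k) (hkn : k ≤ n - 1)
    (hf : ∀ j, k ≤ j → j < n → f j < k) (t : ℕ) :
    tailSum (caterpillar n k f) n t = #{y ∈ Ico 1 n | t ≤ edgeWeight n k f y} := by
  rw [card_filter_le_edgeWeight (by omega), tailSum]
  exact sum_congr rfl fun i _ => r_caterpillar hk hkn hf i

theorem card_edgeWeight_le_doubleStar {a b : ℕ} (hn : n = a + b + k) (hab : a ≤ b)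
    (hba : b ≤ a + 1) (hk : 2 ≤ k) {t : ℕ} (ht : t ≤ n / 2) :
    #{y ∈ Ico 1 n | t ≤ edgeWeight n k f y} ≤
      #{y ∈ Ico 1 n | t ≤ edgeWeight n k (fun j => if j < k + a then 0 else k - 1) y} := by
  refine card_le_card_of_injOn
    (fun y => if a + 2 ≤ t then k + b - weightRight n k f y else y) ?_ ?_
  · intro y hy
    simp only [mem_coe, mem_filter, mem_Ico] at hy ⊢
    unfold edgeWeight at hy ⊢
    by_cases hta : a + 2 ≤ t
    · simp only [hta, if_true]
      have hyk : y < k := by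
        by_contra hyk
        rw [if_neg hyk] at hy
        omega
      rw [if_pos hyk] at hy
      rw [if_pos (by omega), weightRight_doubleStar hn (by omega) (by omega)]
      omega
    · simp only [hta, if_false]
      by_cases hyk : y < k
      · rw [if_pos hyk, weightRight_doubleStar hn (by omega) (by omega)]
        omega
      · rw [if_neg hyk] at hy ⊢
        exact hy
  · intro y hy z hz h
    simp only [mem_coe, mem_filter, mem_Ico] at hy hz h
    unfold edgeWeight at hy hz
    by_cases hta : a + 2 ≤ t
    · have hyk : y < k := by
        by_contra hyk
        rw [if_neg hyk] at hy
        omega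
      have hzk : z < k := by
        by_contra hzk
        rw [if_neg hzk] at hz
        omega
      rw [if_pos hyk] at hy
      rw [if_pos hzk] at hz
      simp only [hta, if_true] at h
      have hkn : k ≤ n := by omega
      exact weightRight_injOn (f := f) hkn hyk.le hzk.le (by omega)
    · simpa only [hta, if_false] using h

theorem card_edgeWeight_doubleStar_le_one {a b : ℕ} (hn : n = a + b + k)
    (hab : b = a + 1) :
    #{y ∈ Ico 1 k |
      edgeWeight n k (fun j => if j < k + a then 0 else k - 1) y = a + 1} ≤ 1 := by
  refine (card_le_card (t := {1}) ?_).trans (card_singleton 1).le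
  intro y hy
  rw [mem_filter, mem_Ico, edgeWeight] at hy
  rw [if_pos hy.1.2, weightRight_doubleStar hn hy.1.1 hy.1.2] at hy
  rw [mem_singleton]
  omega

theorem card_ends_of_card_edgeWeight_eq {a b : ℕ} (hn : n = a + b + k) (hab : a ≤ b)
    (hba : b ≤ a + 1) (hk : 2 ≤ k) (hf : ∀ j, k ≤ j → j < n → f j < k)
    (h : ∀ i, 1 ≤ i → i ≤ n / 2 → #{y ∈ Ico 1 k | edgeWeight n k f y = i} =
      #{y ∈ Ico 1 k | edgeWeight n k (fun j => if j < k + a then 0 else k - 1) y = i}) :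
    (#{j ∈ Ico k n | f j = 0} = a ∧ #{j ∈ Ico k n | f j = k - 1} = b) ∨
    (#{j ∈ Ico k n | f j = 0} = b ∧ #{j ∈ Ico k n | f j = k - 1} = a) := by
  have hkn : k ≤ n := by omega
  have hsum : #{j ∈ Ico k n | 1 ≤ f j} + #{j ∈ Ico k n | f j = 0} = n - k := by
    rw [← Nat.card_Ico, ← card_filter_add_card_filter_not (s := Ico k n) (fun j => 1 ≤ f j)]
    congr 2
    exact filter_congr fun j _ => by omega
  have hlast : #{j ∈ Ico k n | k - 1 ≤ f j} = #{j ∈ Ico k n | f j = k - 1} := by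
    congr 1
    refine filter_congr fun j hj => ?_
    have := hf j (mem_Ico.1 hj).1 (mem_Ico.1 hj).2
    omega
  have hle : #{j ∈ Ico k n | k - 1 ≤ f j} ≤ #{j ∈ Ico k n | 1 ≤ f j} :=
    card_le_card (monotone_filter_right _ fun j _ hj => by omega)
  have hfirst := weightRight_eq (f := f) hkn 1
  have hend := weightRight_eq (f := f) hkn (k - 1)
  have htail : #{y ∈ Ico 1 k | a + 1 ≤ edgeWeight n k f y} = #(Ico 1 k) := by
    rw [card_filter_le_edgeWeight (by omega)]
    rw [sum_congr rfl fun i hi => h i (by have := (mem_Icc.1 hi).1; omega) (mem_Icc.1 hi).2]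
    rw [← card_filter_le_edgeWeight (by omega), filter_true_of_mem]
    intro y hy
    rw [mem_Ico] at hy
    rw [edgeWeight, if_pos hy.2, weightRight_doubleStar hn hy.1 hy.2]
    omega
  rw [card_filter_eq_iff] at htail
  have h1 := htail 1 (by simp; omega)
  have h2 := htail (k - 1) (by simp; omega)
  rw [edgeWeight, if_pos (by omega), le_min_iff] at h1 h2
  by_contra hcon
  have hk3 : k ≠ 2 := by
    rintro rfl
    norm_num at *
    omega
  have hcf : 2 ≤ #{y ∈ Ico 1 k | edgeWeight n k f y = a + 1} := by
    rw [← card_pair (show 1 ≠ k - 1 by omega)]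
    refine card_le_card ?_
    intro y hy
    rw [mem_insert, mem_singleton] at hy
    rw [mem_filter, mem_Ico, edgeWeight]
    rcases hy with rfl | rfl
    · rw [if_pos (by omega)]
      omega
    · rw [if_pos (by omega)]
      omega
  have hcg := card_edgeWeight_doubleStar_le_one hn (by omega)
  have := h (a + 1) (by omega) (by omega)
  omega

theorem caterpillar_iso_of_card_ends {a b : ℕ} (hn : n = a + b + k) (hk : 2 ≤ k)
    (hf : ∀ j, k ≤ j → j < n → f j < k) (h0 : #{j ∈ Ico k n | f j = 0} = a)
    (hl : #{j ∈ Ico k n | f j = k - 1} = b) :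
    Nonempty (caterpillar n k f ≃g
      caterpillar n k fun j => if j < k + a then 0 else k - 1) := by
  refine caterpillar_iso_of_card_fiber (by omega) hf (fun j _ _ => by split_ifs <;> omega) ?_
  have hunion : #{j ∈ Ico k n | f j = 0 ∨ f j = k - 1} = #(Ico k n) := by
    rw [filter_or, card_union_of_disjoint, h0, hl, Nat.card_Ico]
    · omega
    · exact disjoint_filter.2 fun j _ h1 h2 => by omega
  rw [card_filter_eq_iff] at hunion
  intro p
  by_cases hp0 : p = 0
  · subst hp0
    rw [h0]
    have : #{j ∈ Ico k n | (if j < k + a then 0 else k - 1) = 0} = #(Ico k (k + a)) := by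
      congr 1
      ext j
      simp only [mem_filter, mem_Ico]
      split_ifs <;> omega
    rw [this, Nat.card_Ico]
    omega
  by_cases hpl : p = k - 1
  · subst hpl
    rw [hl]
    have : #{j ∈ Ico k n | (if j < k + a then 0 else k - 1) = k - 1} = #(Ico (k + a) n) := by
      congr 1
      ext j
      simp only [mem_filter, mem_Ico]
      split_ifs <;> omega
    rw [this, Nat.card_Ico]
    omega
  · rw [filter_false_of_mem, filter_false_of_mem]
    · intro j _
      split_ifs <;> omega
    · intro j hj
      have := hunion j hj
      omega

end Caterpillar

/-- Let `T = CP(n; n₁, …, n_k) ∈ C(n,k)` be a caterpillar tree with respect to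
the path `P_k`, where `2 ≤ k ≤ n − 1`. Then `T ⪯ CP_{n;⌊(n−k)/2⌋,⌈(n−k)/2⌉}`, and
`r(T) = r(CP_{n;⌊(n−k)/2⌋,⌈(n−k)/2⌉})` iff `T` is isomorphic to it. -/
theorem stmt9 (n k : ℕ) (f : ℕ → ℕ) (hk2 : 2 ≤ k) (hkn : k ≤ n - 1)
    (hf : ∀ j, k ≤ j → j < n → f j < k) :
    Preceq n (caterpillar n k f) (doubleStar n ((n - k) / 2) ((n - k + 1) / 2)) ∧
    (SameEdgeDivision n (caterpillar n k f)
        (doubleStar n ((n - k) / 2) ((n - k + 1) / 2)) ↔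
      Nonempty (caterpillar n k f ≃g doubleStar n ((n - k) / 2) ((n - k + 1) / 2))) := by
  obtain ⟨a, ha⟩ : ∃ a, a = (n - k) / 2 := ⟨_, rfl⟩
  obtain ⟨b, hb⟩ : ∃ b, b = (n - k + 1) / 2 := ⟨_, rfl⟩
  rw [← ha, ← hb]
  have hn : n = a + b + k := by omega
  have hg : ∀ j, k ≤ j → j < n → (if j < k + a then 0 else k - 1) < k := fun j _ _ => by
    split_ifs <;> omega
  obtain ⟨e⟩ := doubleStar_iso_caterpillar (n := n) (k := k) (by omega) hn
  have hr := r_eq_of_iso e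
  refine ⟨?_, ?_, ?_⟩
  · intro t _ ht
    have hd : tailSum (doubleStar n a b) n t =
        tailSum (caterpillar n k fun j => if j < k + a then 0 else k - 1) n t :=
      Finset.sum_congr rfl fun i _ => hr i
    rw [hd, tailSum_caterpillar hk2 hkn hf, tailSum_caterpillar hk2 hkn hg]
    exact card_edgeWeight_le_doubleStar hn (by omega) (by omega) hk2 ht
  · intro h
    have hspine : ∀ i, 1 ≤ i → i ≤ n / 2 →
        (Finset.filter (fun y => edgeWeight n k f y = i) (Finset.Ico 1 k)).card =
        (Finset.filter (fun y => edgeWeight n k (fun j => if j < k + a then 0 else k - 1) y = i)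
          (Finset.Ico 1 k)).card := by
      intro i h1 h2
      have h3 := h i h1 h2
      rw [hr, r_caterpillar hk2 hkn hf, r_caterpillar hk2 hkn hg,
        card_filter_Ico_split (l := 1) (m := k) (n := n) (by omega) (by omega)
          (fun y => edgeWeight n k f y = i),
        card_filter_Ico_split (l := 1) (m := k) (n := n) (by omega) (by omega)
          (fun y => edgeWeight n k (fun j => if j < k + a then 0 else k - 1) y = i)] at h3
      have h4 : Finset.filter (fun y => edgeWeight n k f y = i) (Finset.Ico k n) =
          Finset.filter (fun y => edgeWeight n k (fun j => if j < k + a then 0 else k - 1) y = i)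
            (Finset.Ico k n) := by
        refine Finset.filter_congr fun y hy => ?_
        have hy' := (Finset.mem_Ico.1 hy).1.not_gt
        rw [edgeWeight, edgeWeight, if_neg hy', if_neg hy']
      rw [h4] at h3
      exact Nat.add_right_cancel h3
    rcases card_ends_of_card_edgeWeight_eq hn (by omega) (by omega) hk2 hf hspine with
      ⟨h0, hl⟩ | ⟨h0, hl⟩
    · obtain ⟨e'⟩ := caterpillar_iso_of_card_ends hn hk2 hf h0 hl
      exact ⟨e'.trans e.symm⟩
    · obtain ⟨e₁⟩ := caterpillar_iso_reverse (n := n) (k := k) (by omega) hf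
      obtain ⟨e₂⟩ := caterpillar_iso_of_card_ends (f := fun j => k - 1 - f j) hn hk2
        (fun j _ _ => by omega)
        (by
          rw [← hl]
          congr 1
          refine Finset.filter_congr fun j hj => ?_
          have := hf j (Finset.mem_Ico.1 hj).1 (Finset.mem_Ico.1 hj).2
          omega)
        (by
          rw [← h0]
          congr 1
          refine Finset.filter_congr fun j hj => ?_
          have := hf j (Finset.mem_Ico.1 hj).1 (Finset.mem_Ico.1 hj).2
          omega)
      exact ⟨(e₁.trans e₂).trans e.symm⟩
  · rintro ⟨e'⟩ i _ _
    exact r_eq_of_iso e' i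

end TreeOrder
end

section
/- Let T be a tree on n vertices with exactly q pendent vertices, where 2 < q < n − 1. Then T ⪯ CP_{n;⌊q/2⌋,⌈q/2⌉}, and r(T) = r(CP_{n;⌊q/2⌋,⌈q/2⌉}) if and only if T is isomorphic to CP_{n;⌊q/2⌋,⌈q/2⌉}. -/
namespace TreeOrder

attribute [local instance] Classical.propDecidable

variable {V : Type*} {W : Type*}

section Distance

variable {G : SimpleGraph V}

lemma dist_add_dist_of_mem_support {x y z : V} (p : G.Walk x y)
    (hp : p.length = G.dist x y) (hz : z ∈ p.support) :
    G.dist x z + G.dist z y ≤ G.dist x y := by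
  classical
  have h1 := SimpleGraph.dist_le (p.takeUntil z hz)
  have h2 := SimpleGraph.dist_le (p.dropUntil z hz)
  have h3 := congrArg SimpleGraph.Walk.length (p.take_spec hz)
  rw [SimpleGraph.Walk.length_append] at h3
  omega

/-- If every edge leaving `C` is `uv`, then a geodesic from `C` to its complement uses `uv`. -/
lemma dist_add_dist_le_of_unique_crossing (hG : G.Connected) {C : Set V} {u v : V}
    (hC : ∀ a b, G.Adj a b → a ∈ C → b ∉ C → a = u ∧ b = v) {x y : V}
    (hx : x ∈ C) (hy : y ∉ C) :
    G.dist x u + G.dist u y ≤ G.dist x y ∧ G.dist x v + G.dist v y ≤ G.dist x y := by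
  obtain ⟨p, hp⟩ := hG.exists_walk_length_eq_dist x y
  obtain ⟨d, hd, h1, h2⟩ := p.exists_boundary_dart C hx hy
  obtain ⟨rfl, rfl⟩ := hC _ _ d.adj h1 h2
  exact ⟨dist_add_dist_of_mem_support p hp (p.dart_fst_mem_support_of_mem_darts hd),
    dist_add_dist_of_mem_support p hp (p.dart_snd_mem_support_of_mem_darts hd)⟩

/-- If `uv` is the only edge leaving `C`, then `C` consists of the vertices closer to `u`. -/
lemma side_eq_card_of_unique_crossing [Fintype V] (hG : G.Connected) {C : Finset V} {u v : V}
    (huv : G.Adj u v) (hu : u ∈ C) (hv : v ∉ C)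
    (hC : ∀ a b, G.Adj a b → a ∈ C → b ∉ C → a = u ∧ b = v) : side G u v = C.card := by
  have h1 : G.dist u v = 1 := SimpleGraph.dist_eq_one_iff_adj.2 huv
  have h2 : G.dist v u = 1 := SimpleGraph.dist_eq_one_iff_adj.2 huv.symm
  unfold side
  congr 1
  ext w
  simp only [Finset.mem_filter, Finset.mem_univ, true_and]
  constructor
  · intro h
    by_contra hw
    have := (dist_add_dist_le_of_unique_crossing hG (C := {x | x ∉ C}) (u := v) (v := u)
      (fun a b hab ha hb => (hC b a hab.symm (not_not.1 hb) ha).symm) hw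
      (not_not.2 hu)).1
    omega
  · intro hw
    have := (dist_add_dist_le_of_unique_crossing hG (C := (C : Set V)) hC hw hv).1
    omega

lemma side_eq_compl_card_of_unique_crossing [Fintype V] (hG : G.Connected) {C : Finset V}
    {u v : V} (huv : G.Adj u v) (hu : u ∈ C) (hv : v ∉ C)
    (hC : ∀ a b, G.Adj a b → a ∈ C → b ∉ C → a = u ∧ b = v) :
    side G v u = Fintype.card V - C.card := by
  rw [side_eq_card_of_unique_crossing hG (C := Cᶜ) huv.symm (by simpa) (by simpa),
    Finset.card_compl]
  intro a b hab ha hb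
  simp only [Finset.mem_compl, not_not] at ha hb
  exact (hC b a hab.symm hb ha).symm

lemma side_add_side_le [Fintype V] (u v : V) : side G u v + side G v u ≤ Fintype.card V := by
  unfold side
  rw [← Finset.card_union_of_disjoint]
  · exact Finset.card_le_univ _
  · rw [Finset.disjoint_filter]
    intro x _ h
    omega

lemma one_le_side [Fintype V] {u v : V} (huv : G.Adj u v) : 1 ≤ side G u v := by
  refine Finset.card_pos.2 ⟨u, ?_⟩
  simp [SimpleGraph.dist_eq_one_iff_adj.2 huv]

lemma mu_comm [Fintype V] (u v : V) : mu G u v = mu G v u := min_comm _ _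

lemma one_le_mu [Fintype V] {u v : V} (huv : G.Adj u v) : 1 ≤ mu G u v :=
  le_min (one_le_side huv) (one_le_side huv.symm)

lemma mu_le_half [Fintype V] (u v : V) : mu G u v ≤ Fintype.card V / 2 := by
  have := side_add_side_le (G := G) u v
  unfold mu
  omega

@[simp] lemma muE_mk [Fintype V] (u v : V) : muE G s(u, v) = mu G u v := rfl

/-- The tail sum counts the edges `e` with `k ≤ μ(e)`. -/
lemma tailSum_eq_card [Fintype V] (k : ℕ) :
    tailSum G (Fintype.card V) k =
      (Finset.univ.filter fun e : Sym2 V => e ∈ G.edgeSet ∧ k ≤ muE G e).card := by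
  unfold tailSum r
  rw [Finset.card_eq_sum_card_fiberwise (f := muE G) (t := Finset.Icc k (Fintype.card V / 2))]
  · refine Finset.sum_congr rfl fun i hi => ?_
    rw [Finset.filter_filter]
    congr 1
    ext e
    simp only [Finset.mem_Icc] at hi
    simp only [Finset.mem_filter, Finset.mem_univ, true_and]
    constructor
    · rintro ⟨h1, rfl⟩
      exact ⟨⟨h1, hi.1⟩, rfl⟩
    · rintro ⟨⟨h1, -⟩, h2⟩
      exact ⟨h1, h2⟩
  · intro e he
    simp only [Finset.coe_filter, Finset.mem_univ, true_and, Set.mem_ofPred_eq] at he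
    simp only [Finset.coe_Icc, Set.mem_Icc]
    refine ⟨he.2, ?_⟩
    induction e with | _ u v => exact mu_le_half u v

end Distance

section Tree

variable {G : SimpleGraph V}

lemma exists_parent (hG : G.Connected) {w ρ : V} (h : w ≠ ρ) :
    ∃ p, G.Adj w p ∧ G.dist p ρ + 1 = G.dist w ρ := by
  obtain ⟨p, hp⟩ := hG.exists_walk_length_eq_dist w ρ
  cases p with
  | nil => exact absurd rfl h
  | @cons _ b _ hadj q =>
    refine ⟨b, hadj, ?_⟩
    have h1 := SimpleGraph.dist_le q
    have h2 := hG.dist_triangle (u := w) (v := b) (w := ρ)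
    rw [SimpleGraph.dist_eq_one_iff_adj.2 hadj] at h2
    rw [SimpleGraph.Walk.length_cons] at hp
    omega

lemma parent_unique (hT : G.IsTree) {w ρ a b : V} (ha : G.Adj w a) (hb : G.Adj w b)
    (ha' : G.dist a ρ + 1 = G.dist w ρ) (hb' : G.dist b ρ + 1 = G.dist w ρ) : a = b := by
  obtain ⟨p, hp⟩ := hT.1.exists_walk_length_eq_dist a ρ
  obtain ⟨q, hq⟩ := hT.1.exists_walk_length_eq_dist b ρ
  have h1 : (SimpleGraph.Walk.cons ha p).IsPath :=
    SimpleGraph.Walk.isPath_of_length_eq_dist _ (by rw [SimpleGraph.Walk.length_cons]; omega)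
  have h2 : (SimpleGraph.Walk.cons hb q).IsPath :=
    SimpleGraph.Walk.isPath_of_length_eq_dist _ (by rw [SimpleGraph.Walk.length_cons]; omega)
  have h3 := (hT.2.subsingleton_path _ _).elim ⟨_, h1⟩ ⟨_, h2⟩
  have h4 := congrArg (fun x => x.1.snd) h3
  simpa using h4

lemma dist_adj_cases (hT : G.IsTree) (ρ : V) {a b : V} (h : G.Adj a b) :
    G.dist a ρ = G.dist b ρ + 1 ∨ G.dist b ρ = G.dist a ρ + 1 := by
  have := hT.dist_eq_dist_add_one_of_adj ρ h
  simpa only [SimpleGraph.dist_comm (u := ρ)] using this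

/-- The edge `wp` of a tree is the only edge leaving the set of vertices closer to `w`. -/
lemma side_crossing (hT : G.IsTree) {w p : V} (hwp : G.Adj w p) (a b : V) (hab : G.Adj a b)
    (ha : G.dist a w < G.dist a p) (hb : ¬ G.dist b w < G.dist b p) : a = w ∧ b = p := by
  have e1 := dist_adj_cases hT a hwp
  have e2 := dist_adj_cases hT b hwp
  have e3 := dist_adj_cases hT w hab
  have e4 := dist_adj_cases hT p hab
  rw [SimpleGraph.dist_comm (u := w), SimpleGraph.dist_comm (u := p)] at e1 e2
  have haw : a = w := by
    by_contra hne
    obtain ⟨c, hc, hc'⟩ := exists_parent hT.1 hne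
    have e5 := dist_adj_cases hT c hwp
    rw [SimpleGraph.dist_comm (u := w), SimpleGraph.dist_comm (u := p)] at e5
    have e6 := dist_adj_cases hT p hc
    have := parent_unique hT hab hc (ρ := p) (by omega) (by omega)
    subst this
    omega
  refine ⟨haw, ?_⟩
  subst haw
  rw [SimpleGraph.dist_self] at *
  exact hT.1.dist_eq_zero_iff.1 (by omega)

lemma dist_eq_of_crossing (hT : G.IsTree) {w p : V} (hwp : G.Adj w p) {x y : V}
    (hx : G.dist x w < G.dist x p) (hy : ¬ G.dist y w < G.dist y p) :
    G.dist x y = G.dist x w + G.dist w y := by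
  have := (dist_add_dist_le_of_unique_crossing hT.1
    (C := {z | G.dist z w < G.dist z p}) (side_crossing hT hwp) hx hy).1
  have := hT.1.dist_triangle (u := x) (v := w) (w := y)
  omega

lemma side_add_side [Fintype V] (hT : G.IsTree) {u v : V} (h : G.Adj u v) :
    side G u v + side G v u = Fintype.card V := by
  have h1 : side G v u = Fintype.card V -
      (Finset.univ.filter fun w => G.dist w u < G.dist w v).card := by
    apply side_eq_compl_card_of_unique_crossing hT.1 h
    · simp [SimpleGraph.dist_eq_one_iff_adj.2 h]
    · simp
    · intro a b hab ha hb
      simp only [Finset.mem_filter, Finset.mem_univ, true_and] at ha hb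
      exact side_crossing hT h a b hab ha hb
  rw [h1]
  have : (Finset.univ.filter fun w => G.dist w u < G.dist w v).card ≤ Fintype.card V :=
    Finset.card_le_univ _
  unfold side
  omega

lemma card_edges [Fintype V] (hT : G.IsTree) :
    (Finset.univ.filter fun e : Sym2 V => e ∈ G.edgeSet).card + 1 = Fintype.card V := by
  rw [← hT.card_edgeFinset]
  congr 2
  ext e
  simp

/-- Non-root vertices whose parent edge has `μ < k` bound the number of edges with `k ≤ μ`. -/
lemma card_edges_add_card_le [Fintype V] (hT : G.IsTree) (ρ : V) (k : ℕ) (S : Finset V)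
    (hρ : ρ ∉ S) (hS : ∀ w ∈ S, ∀ p, G.Adj w p → G.dist p ρ + 1 = G.dist w ρ → mu G w p < k) :
    (Finset.univ.filter fun e : Sym2 V => e ∈ G.edgeSet ∧ k ≤ muE G e).card + S.card + 1
      ≤ Fintype.card V := by
  rw [← card_edges hT, add_le_add_iff_right]
  have hpar : ∀ w, ∃ p, w ∈ S → G.Adj w p ∧ G.dist p ρ + 1 = G.dist w ρ := by
    intro w
    by_cases hw : w ∈ S
    · obtain ⟨p, hp⟩ := exists_parent hT.1 (ne_of_mem_of_not_mem hw hρ)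
      exact ⟨p, fun _ => hp⟩
    · exact ⟨w, fun h => absurd h hw⟩
  choose par hpar using hpar
  have hinj : Set.InjOn (fun w => s(w, par w)) (S : Set V) := by
    intro a ha b hb hab
    rcases Sym2.eq_iff.1 hab with h | ⟨h1, h2⟩
    · exact h.1
    · have e1 := (hpar a ha).2
      have e2 := (hpar b hb).2
      rw [← h1] at e2
      rw [h2] at e1
      omega
  rw [← Finset.card_image_of_injOn hinj, ← Finset.card_union_of_disjoint]
  · refine Finset.card_le_card fun e he => ?_
    simp only [Finset.mem_union, Finset.mem_filter, Finset.mem_univ, true_and,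
      Finset.mem_image] at he ⊢
    rcases he with h | ⟨w, hw, rfl⟩
    · exact h.1
    · exact (hpar w hw).1
  · rw [Finset.disjoint_left]
    intro e he he'
    obtain ⟨w, hw, rfl⟩ := Finset.mem_image.1 he'
    simp only [Finset.mem_filter, Finset.mem_univ, true_and, muE_mk] at he
    have := hS w hw _ (hpar w hw).1 (hpar w hw).2
    omega

end Tree

section Bounds

variable {G : SimpleGraph V}

lemma side_lt_side_of_nested [Fintype V] (hT : G.IsTree) {x y w p : V} (hxy : G.Adj x y)
    (hwp : G.Adj w p) (hw : G.dist w x < G.dist w y) (hx : ¬ G.dist x w < G.dist x p) :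
    (∀ z, G.dist z w < G.dist z p → G.dist z x < G.dist z y) ∧ side G w p < side G x y := by
  have hy : ¬ G.dist y w < G.dist y p := by
    intro hy
    obtain ⟨rfl, rfl⟩ := side_crossing hT hwp y x hxy.symm hy hx
    simp at hw
  have hsub : ∀ z, G.dist z w < G.dist z p → G.dist z x < G.dist z y := by
    intro z hz
    rw [dist_eq_of_crossing hT hwp hz hx, dist_eq_of_crossing hT hwp hz hy]
    omega
  refine ⟨hsub, Finset.card_lt_card ⟨?_, fun h => hx ?_⟩⟩
  · intro z hz
    simpa using hsub z (by simpa using hz)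
  · simpa using @h x (by simp [SimpleGraph.dist_eq_one_iff_adj.2 hxy])

/-- A tree on `n` vertices has at most `n - 2k + 1` edges with `k ≤ μ`. -/
lemma card_edges_add_two_mul_le [Fintype V] (hT : G.IsTree) (k : ℕ)
    (hk : 2 * k ≤ Fintype.card V + 1) :
    (Finset.univ.filter fun e : Sym2 V => e ∈ G.edgeSet ∧ k ≤ muE G e).card + 2 * k
      ≤ Fintype.card V + 1 := by
  rcases (Finset.univ.filter fun e : Sym2 V => e ∈ G.edgeSet ∧ k ≤ muE G e).eq_empty_or_nonempty
    with h | ⟨e, he⟩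
  · rw [h]
    simpa using hk
  obtain ⟨⟨u, v⟩, huv, humin⟩ := Finset.exists_min_image
    (Finset.univ.filter fun d : V × V => G.Adj d.1 d.2 ∧ k ≤ mu G d.1 d.2)
    (fun d => side G d.1 d.2) (by
      induction e with | _ u v => exact ⟨(u, v), by simpa using he⟩)
  simp only [Finset.mem_filter, Finset.mem_univ, true_and, Prod.forall] at huv humin
  obtain ⟨huv, huvk⟩ := huv
  have duv := SimpleGraph.dist_eq_one_iff_adj.2 huv
  have dvu := SimpleGraph.dist_eq_one_iff_adj.2 huv.symm
  obtain ⟨⟨x, y⟩, hxy, hxmin⟩ := Finset.exists_min_image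
    (Finset.univ.filter fun d : V × V => (G.Adj d.1 d.2 ∧ k ≤ mu G d.1 d.2) ∧
      ∀ z, G.dist z d.1 < G.dist z d.2 → ¬ G.dist z u < G.dist z v)
    (fun d => side G d.1 d.2) ⟨(v, u), by
      simp only [Finset.mem_filter, Finset.mem_univ, true_and]
      exact ⟨⟨huv.symm, by rwa [mu_comm]⟩, fun z h => by omega⟩⟩
  simp only [Finset.mem_filter, Finset.mem_univ, true_and, Prod.forall] at hxy hxmin
  obtain ⟨⟨hxy, hxyk⟩, hdisj⟩ := hxy
  have dxy := SimpleGraph.dist_eq_one_iff_adj.2 hxy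
  have hux : ¬ G.dist u x < G.dist u y := fun h => hdisj u h (by simp [duv])
  have key := card_edges_add_card_le hT u k
    ((Finset.univ.filter fun w => G.dist w u < G.dist w v).erase u ∪
      (Finset.univ.filter fun w => G.dist w x < G.dist w y).erase x) (by simp [hux]) (by
    intro w hw p hwp hpar
    by_contra hmu
    rw [not_lt] at hmu
    simp only [Finset.mem_union, Finset.mem_erase, Finset.mem_filter, Finset.mem_univ,
      true_and] at hw
    rcases hw with ⟨hwu, hw⟩ | ⟨hwx, hw⟩
    · have := (side_lt_side_of_nested hT huv hwp hw (by
        rw [G.dist_comm (u := u), G.dist_comm (u := u)]; omega)).2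
      have := humin w p ⟨hwp, hmu⟩
      omega
    · have hp : G.dist p x < G.dist p y := by
        by_contra hp
        exact hwx (side_crossing hT hxy w p hwp hw hp).1
      have e1 := dist_eq_of_crossing hT hxy hw hux
      have e2 := dist_eq_of_crossing hT hxy hp hux
      have := side_lt_side_of_nested hT hxy hwp hw (by
        rw [G.dist_comm (u := x), G.dist_comm (u := x)]; omega)
      have := hxmin w p ⟨⟨hwp, hmu⟩, fun z hz => hdisj z (this.1 z hz)⟩
      omega)
  rw [Finset.card_union_of_disjoint, Finset.card_erase_of_mem (by simp [duv]),
    Finset.card_erase_of_mem (by simp [dxy])] at key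
  · have h1 : k ≤ side G u v := huvk.trans (min_le_left _ _)
    have h2 : k ≤ side G x y := hxyk.trans (min_le_left _ _)
    unfold side at h1 h2
    omega
  · rw [Finset.disjoint_left]
    intro z hz hz'
    simp only [Finset.mem_erase, Finset.mem_filter, Finset.mem_univ, true_and] at hz hz'
    exact hdisj z hz'.2 hz.2

lemma eq_of_deg_eq_one [Fintype V] {w a b : V} (hw : deg G w = 1) (ha : G.Adj w a)
    (hb : G.Adj w b) : a = b :=
  Finset.card_le_one.1 hw.le a (by simpa using ha) b (by simpa using hb)

/-- If all neighbours of `s` other than `t` are pendent, then `n_s(st) = deg s`. -/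
lemma side_eq_deg [Fintype V] (hG : G.Connected) {s t : V} (hst : G.Adj s t)
    (h : ∀ z, G.Adj s z → z ≠ t → deg G z = 1) : side G s t = deg G s := by
  rw [side_eq_card_of_unique_crossing hG
    (C := insert s ((Finset.univ.filter fun w => G.Adj s w).erase t)) hst (by simp)
    (by simp [hst.ne'])]
  · rw [Finset.card_insert_of_notMem (by simp), Finset.card_erase_of_mem (by simpa using hst)]
    have : 0 < (Finset.univ.filter fun w => G.Adj s w).card :=
      Finset.card_pos.2 ⟨t, by simpa using hst⟩
    unfold deg
    omega
  · intro a b hab ha hb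
    simp only [Finset.mem_insert, Finset.mem_erase, Finset.mem_filter, Finset.mem_univ,
      true_and, not_or] at ha hb
    rcases ha with rfl | ⟨ha, ha'⟩
    · refine ⟨rfl, ?_⟩
      by_contra hbt
      exact hb.2 ⟨hbt, hab⟩
    · exact absurd (eq_of_deg_eq_one (h a ha' ha) hab ha'.symm) hb.1

lemma mu_le_one_of_deg_eq_one [Fintype V] (hG : G.Connected) {s t : V} (hst : G.Adj s t)
    (h : deg G s = 1) : mu G s t ≤ 1 := by
  have := side_eq_deg hG hst (fun z hz hzt => absurd (eq_of_deg_eq_one h hz hst) hzt)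
  have := min_le_left (side G s t) (side G t s)
  unfold mu
  omega

lemma card_edges_add_card_pendent_le [Fintype V] (hT : G.IsTree) (ρ : V) (hρ : deg G ρ ≠ 1)
    {k : ℕ} (hk : 2 ≤ k) :
    (Finset.univ.filter fun e : Sym2 V => e ∈ G.edgeSet ∧ k ≤ muE G e).card +
      (Finset.univ.filter fun v => deg G v = 1).card + 1 ≤ Fintype.card V := by
  refine card_edges_add_card_le hT ρ k _ (by simpa) fun w hw p hwp _ => ?_
  have := mu_le_one_of_deg_eq_one hT.1 hwp (by simpa using hw)
  omega

end Bounds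

section Iso

variable {G : SimpleGraph V} {H : SimpleGraph W}

lemma dist_iso (φ : G ≃g H) (hG : G.Connected) (u v : V) : H.dist (φ u) (φ v) = G.dist u v := by
  apply le_antisymm
  · obtain ⟨p, hp⟩ := hG.exists_walk_length_eq_dist u v
    rw [← hp, ← SimpleGraph.Walk.length_map φ.toHom p]
    exact SimpleGraph.dist_le _
  · obtain ⟨p, hp⟩ := (φ.connected_iff.1 hG).exists_walk_length_eq_dist (φ u) (φ v)
    rw [← hp]
    exact SimpleGraph.dist_le ((p.map φ.symm.toHom).copy (φ.symm_apply_apply u)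
      (φ.symm_apply_apply v)) |>.trans (by simp)

lemma side_iso [Fintype V] [Fintype W] (φ : G ≃g H) (hG : G.Connected) (u v : V) :
    side H (φ u) (φ v) = side G u v := by
  unfold side
  symm
  refine Finset.card_bij (fun w _ => φ w) ?_ ?_ ?_
  · intro w hw
    simpa [dist_iso φ hG] using hw
  · intro a _ b _ h
    exact φ.injective h
  · intro b hb
    obtain ⟨a, rfl⟩ := φ.surjective b
    exact ⟨a, by simpa [dist_iso φ hG] using hb, rfl⟩

lemma r_iso [Fintype V] [Fintype W] (φ : G ≃g H) (hG : G.Connected) (i : ℕ) : r G i = r H i := by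
  have hmu : ∀ e, muE H (e.map φ) = muE G e := by
    intro e
    induction e with | _ u v => simp [mu, side_iso φ hG]
  have hadj : ∀ e, e.map φ ∈ H.edgeSet ↔ e ∈ G.edgeSet := by
    intro e
    induction e with | _ u v => simpa using φ.map_adj_iff
  unfold r
  refine Finset.card_bij (fun e _ => e.map φ) ?_ ?_ ?_
  · intro e he
    simpa [hmu, hadj] using he
  · intro a _ b _ h
    exact Sym2.map.injective φ.injective h
  · intro b hb
    have hb' : (b.map φ.symm).map φ = b := by
      induction b with | _ u v => simp
    refine ⟨b.map φ.symm, ?_, hb'⟩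
    rw [← hb'] at hb
    simpa only [hmu, hadj, Finset.mem_filter, Finset.mem_univ, true_and] using hb

end Iso

section DoubleStar

variable {n a b : ℕ}

lemma doubleStar_adj {x y : Fin n} : (doubleStar n a b).Adj x y ↔ x ≠ y ∧
    ((((x : ℕ) < a ∧ (y : ℕ) = a) ∨ (a ≤ (x : ℕ) ∧ (x : ℕ) + 1 = y ∧ (y : ℕ) < n - b) ∨
      ((x : ℕ) = n - b - 1 ∧ n - b ≤ (y : ℕ))) ∨
     (((y : ℕ) < a ∧ (x : ℕ) = a) ∨ (a ≤ (y : ℕ) ∧ (y : ℕ) + 1 = x ∧ (x : ℕ) < n - b) ∨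
      ((y : ℕ) = n - b - 1 ∧ n - b ≤ (x : ℕ)))) := by
  simp [doubleStar, SimpleGraph.fromRel_adj]

lemma doubleStar_connected (hn : a + b + 1 ≤ n) : (doubleStar n a b).Connected := by
  have hpath : ∀ j (h : a + j < n - b),
      (doubleStar n a b).Reachable ⟨a, by omega⟩ ⟨a + j, by omega⟩ := by
    intro j
    induction j with
    | zero => intro h; rfl
    | succ j ih =>
      intro h
      refine (ih (by omega)).trans (SimpleGraph.Adj.reachable ?_)
      rw [doubleStar_adj]
      simp only [ne_eq, Fin.mk.injEq]
      omega
  have hreach : ∀ x : Fin n, (doubleStar n a b).Reachable ⟨a, by omega⟩ x := by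
    intro x
    rcases lt_or_ge (x : ℕ) a with h | h
    · refine SimpleGraph.Adj.reachable ?_
      rw [doubleStar_adj, ne_eq, Fin.ext_iff]
      exact ⟨h.ne', Or.inr (Or.inl ⟨h, rfl⟩)⟩
    · rcases lt_or_ge (x : ℕ) (n - b) with h' | h'
      · have := hpath (x - a) (by omega)
        convert this
        omega
      · refine (hpath (n - b - 1 - a) (by omega)).trans (SimpleGraph.Adj.reachable ?_)
        rw [doubleStar_adj, ne_eq, Fin.ext_iff]
        simp only
        omega
  have : Nonempty (Fin n) := ⟨⟨a, by omega⟩⟩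
  exact ⟨fun x y => (hreach x).symm.trans (hreach y)⟩

lemma mu_doubleStar_path (hn : a + b + 1 ≤ n) {x y : Fin n} (hx : a ≤ (x : ℕ))
    (hxy : (x : ℕ) + 1 = y) (hy : (y : ℕ) < n - b) :
    mu (doubleStar n a b) x y = min (x + 1 : ℕ) (n - 1 - x) := by
  have hadj : (doubleStar n a b).Adj x y := by
    rw [doubleStar_adj, ne_eq, Fin.ext_iff]
    omega
  have hcross : ∀ c d, (doubleStar n a b).Adj c d → c ∈ Finset.Iic x → d ∉ Finset.Iic x →
      c = x ∧ d = y := by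
    intro c d hcd hc hd
    simp only [Finset.mem_Iic, Fin.le_def] at hc hd
    rw [doubleStar_adj] at hcd
    rw [Fin.ext_iff, Fin.ext_iff]
    omega
  have hyx : y ∉ Finset.Iic x := by
    simp only [Finset.mem_Iic, Fin.le_def]
    omega
  unfold mu
  rw [side_eq_card_of_unique_crossing (doubleStar_connected hn) hadj (by simp) hyx hcross,
    side_eq_compl_card_of_unique_crossing (doubleStar_connected hn) hadj (by simp) hyx hcross,
    Fin.card_Iic, Fintype.card_fin]
  omega

lemma mu_le_one_of_unique_neighbor [Fintype V] {G : SimpleGraph V} (hG : G.Connected) {x y : V}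
    (hxy : G.Adj x y) (h : ∀ z, G.Adj x z → z = y) : mu G x y ≤ 1 := by
  apply mu_le_one_of_deg_eq_one hG hxy
  refine Finset.card_eq_one.2 ⟨y, ?_⟩
  ext z
  simp only [Finset.mem_filter, Finset.mem_univ, true_and, Finset.mem_singleton]
  exact ⟨h z, fun hz => hz ▸ hxy⟩

/-- An edge of the double star path is pendent or an edge of the underlying path. -/
lemma doubleStar_edge_cases (hn : a + b + 2 ≤ n) {e : Sym2 (Fin n)}
    (he : e ∈ (doubleStar n a b).edgeSet) :
    muE (doubleStar n a b) e ≤ 1 ∨ ∃ x y : Fin n, a ≤ (x : ℕ) ∧ (x : ℕ) + 1 = y ∧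
      (y : ℕ) < n - b ∧ e = s(x, y) := by
  have hG := doubleStar_connected (n := n) (a := a) (b := b) (by omega)
  have key : ∀ x y : Fin n, (doubleStar n a b).Adj x y →
      (((x : ℕ) < a ∧ (y : ℕ) = a) ∨ (a ≤ (x : ℕ) ∧ (x : ℕ) + 1 = y ∧ (y : ℕ) < n - b) ∨
      ((x : ℕ) = n - b - 1 ∧ n - b ≤ (y : ℕ))) →
      mu (doubleStar n a b) x y ≤ 1 ∨
        (a ≤ (x : ℕ) ∧ (x : ℕ) + 1 = y ∧ (y : ℕ) < n - b) := by
    rintro x y hxy (h | h | h)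
    · left
      refine mu_le_one_of_unique_neighbor hG hxy fun z hz => ?_
      rw [doubleStar_adj] at hz
      rw [Fin.ext_iff]
      omega
    · exact Or.inr h
    · left
      rw [mu_comm]
      refine mu_le_one_of_unique_neighbor hG hxy.symm fun z hz => ?_
      rw [doubleStar_adj] at hz
      rw [Fin.ext_iff]
      omega
  induction e with | _ x y =>
  rw [SimpleGraph.mem_edgeSet] at he
  rcases (doubleStar_adj.1 he).2 with h | h
  · exact (key x y he h).imp_right fun ⟨h1, h2, h3⟩ => ⟨x, y, h1, h2, h3, rfl⟩
  · rw [muE_mk, mu_comm]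
    exact (key y x he.symm h).imp_right fun ⟨h1, h2, h3⟩ => ⟨y, x, h1, h2, h3, Sym2.eq_swap⟩

lemma r_doubleStar_eq_zero (hn : a + b + 2 ≤ n) (hab : a ≤ b) {i : ℕ} (hi : 2 ≤ i)
    (hia : i ≤ a) : r (doubleStar n a b) i = 0 := by
  refine Finset.card_eq_zero.2 (Finset.filter_eq_empty_iff.2 ?_)
  rintro e - ⟨he, hmu⟩
  rcases doubleStar_edge_cases hn he with h | ⟨x, y, h1, h2, h3, rfl⟩
  · omega
  · rw [muE_mk, mu_doubleStar_path (by omega) h1 h2 h3] at hmu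
    omega

lemma r_doubleStar_le_one (hn : a + (a + 1) + 2 ≤ n) (ha : 1 ≤ a) :
    r (doubleStar n a (a + 1)) (a + 1) ≤ 1 := by
  refine Finset.card_le_one.2 ?_
  have key : ∀ e, e ∈ (doubleStar n a (a + 1)).edgeSet →
      muE (doubleStar n a (a + 1)) e = a + 1 → e = s(⟨a, by omega⟩, ⟨a + 1, by omega⟩) := by
    intro e he hmu
    rcases doubleStar_edge_cases hn he with h | ⟨x, y, h1, h2, h3, rfl⟩
    · omega
    · rw [muE_mk, mu_doubleStar_path (by omega) h1 h2 h3] at hmu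
      congr 2 <;> (rw [Fin.ext_iff]; simp only; omega)
  intro e he f hf
  simp only [Finset.mem_filter, Finset.mem_univ, true_and] at he hf
  rw [key e he.1 he.2, key f hf.1 hf.2]

lemma le_card_edges_doubleStar (hn : a + b + 2 ≤ n) {k : ℕ} (hab : a ≤ b) (hba : b ≤ a + 1)
    (hk : 1 ≤ k) (hkn : k ≤ n / 2) :
    min (n - a - b - 1) (n + 1 - 2 * k) ≤ (Finset.univ.filter fun e : Sym2 (Fin n) =>
      e ∈ (doubleStar n a b).edgeSet ∧ k ≤ muE (doubleStar n a b) e).card := by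
  have hn0 : NeZero n := ⟨by omega⟩
  have hcard : min (n - a - b - 1) (n + 1 - 2 * k) ≤
      (Finset.Icc (max a (k - 1)) (min (n - b - 2) (n - 1 - k))).card := by
    rw [Nat.card_Icc]
    omega
  refine hcard.trans (Finset.card_le_card_of_injOn
    (fun j => s(Fin.ofNat n j, Fin.ofNat n (j + 1))) ?_ ?_)
  · intro j hj
    simp only [Finset.coe_Icc, Set.mem_Icc] at hj
    have e1 : (Fin.ofNat n j : ℕ) = j := Nat.mod_eq_of_lt (by omega)
    have e2 : (Fin.ofNat n (j + 1) : ℕ) = j + 1 := Nat.mod_eq_of_lt (by omega)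
    simp only [Finset.coe_filter, Finset.mem_univ, true_and, Set.mem_ofPred_eq, muE_mk,
      SimpleGraph.mem_edgeSet]
    rw [mu_doubleStar_path (by omega) (by omega) (by omega) (by omega), doubleStar_adj, ne_eq,
      Fin.ext_iff]
    omega
  · intro i hi j hj hij
    simp only [Finset.coe_Icc, Set.mem_Icc] at hi hj
    have e1 : (Fin.ofNat n j : ℕ) = j := Nat.mod_eq_of_lt (by omega)
    have e2 : (Fin.ofNat n (j + 1) : ℕ) = j + 1 := Nat.mod_eq_of_lt (by omega)
    have e3 : (Fin.ofNat n i : ℕ) = i := Nat.mod_eq_of_lt (by omega)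
    have e4 : (Fin.ofNat n (i + 1) : ℕ) = i + 1 := Nat.mod_eq_of_lt (by omega)
    rcases Sym2.eq_iff.1 hij with ⟨h1, h2⟩ | ⟨h1, h2⟩ <;> rw [Fin.ext_iff] at h1 h2 <;> omega

lemma le_card_edges_doubleStar_one (hn : a + b + 1 ≤ n) :
    n ≤ (Finset.univ.filter fun e : Sym2 (Fin n) =>
      e ∈ (doubleStar n a b).edgeSet ∧ 1 ≤ muE (doubleStar n a b) e).card + 1 := by
  have h := (doubleStar_connected hn).card_vert_le_card_edgeSet_add_one
  rw [Nat.card_eq_fintype_card, Fintype.card_fin, Nat.card_eq_fintype_card,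
    ← SimpleGraph.edgeFinset_card] at h
  convert h using 3
  ext e
  simp only [Finset.mem_filter, Finset.mem_univ, true_and, SimpleGraph.mem_edgeFinset,
    and_iff_left_iff_imp]
  induction e with | _ x y => exact fun h => one_le_mu h

end DoubleStar

lemma preceq_doubleStar [Fintype V] {G : SimpleGraph V} (hT : G.IsTree) {a b : ℕ}
    (hab : a ≤ b) (hba : b ≤ a + 1) (hn : a + b + 2 ≤ Fintype.card V)
    (hq : (Finset.univ.filter fun v => deg G v = 1).card = a + b) :
    Preceq (Fintype.card V) G (doubleStar (Fintype.card V) a b) := by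
  intro k hk hkn
  have hstar := tailSum_eq_card (G := doubleStar (Fintype.card V) a b) k
  rw [Fintype.card_fin] at hstar
  rw [tailSum_eq_card, hstar]
  rcases hk.eq_or_lt with rfl | hk2
  · have h1 := le_card_edges_doubleStar_one (n := Fintype.card V) (a := a) (b := b) (by omega)
    have h2 := card_edges hT
    have h3 : (Finset.univ.filter fun e : Sym2 V => e ∈ G.edgeSet ∧ 1 ≤ muE G e).card ≤
      (Finset.univ.filter fun e : Sym2 V => e ∈ G.edgeSet).card :=
      Finset.card_le_card (Finset.monotone_filter_right _ fun e _ he => he.1)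
    omega
  · have h1 := le_card_edges_doubleStar hn hab hba hk hkn
    have h2 := card_edges_add_two_mul_le hT k (by omega)
    obtain ⟨ρ, hρ⟩ : ∃ ρ, deg G ρ ≠ 1 := by
      by_contra! h
      rw [Finset.filter_true_of_mem (fun v _ => h v), Finset.card_univ] at hq
      omega
    have h3 := card_edges_add_card_pendent_le hT ρ hρ hk2
    omega

lemma exists_injOn_lt_card (S : Finset V) :
    ∃ e : V → ℕ, (∀ w ∈ S, e w < S.card) ∧ ∀ w ∈ S, ∀ w' ∈ S, e w = e w' → w = w' := by
  refine ⟨fun w => if h : w ∈ S then S.equivFin ⟨w, h⟩ else 0, fun w hw => ?_,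
    fun w hw w' hw' h => ?_⟩
  · simp [hw]
  · simpa [hw, hw', Fin.val_inj] using h

section Structure

variable [Fintype V] {G : SimpleGraph V}

lemma deg_ne_one_of_adj {p x y : V} (hx : G.Adj p x) (hy : G.Adj p y) (hxy : x ≠ y) :
    deg G p ≠ 1 :=
  fun h => hxy (eq_of_deg_eq_one h hx hy)

lemma one_le_deg {x y : V} (h : G.Adj x y) : 1 ≤ deg G x :=
  Finset.card_pos.2 ⟨y, by simpa using h⟩

lemma deg_parent_ne_one (hG : G.Connected) {w p ρ : V} (hρ : deg G ρ ≠ 1) (hwp : G.Adj w p)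
    (h : G.dist p ρ + 1 = G.dist w ρ) : deg G p ≠ 1 := by
  rcases eq_or_ne p ρ with rfl | hne
  · exact hρ
  · obtain ⟨c, hc, hc'⟩ := exists_parent hG hne
    refine deg_ne_one_of_adj hwp.symm hc ?_
    rintro rfl
    omega

/-- `s` is a non-pendent vertex whose only non-pendent neighbour is `s'`,
the neighbour of `s` in the direction of `t`. -/
structure IsStarEnd (G : SimpleGraph V) (s t s' : V) : Prop where
  deg_ne_one : deg G s ≠ 1
  adj : G.Adj s s'
  deg_eq_one : ∀ z, G.Adj s z → z ≠ s' → deg G z = 1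
  deg_next_ne_one : deg G s' ≠ 1
  dist_next : G.dist s' t + 1 = G.dist s t

lemma exists_isStarEnd (hT : G.IsTree)
    (h : 1 < (Finset.univ.filter fun v => deg G v ≠ 1).card) :
    ∃ s t s' t', s ≠ t ∧ IsStarEnd G s t s' ∧ IsStarEnd G t s t' := by
  obtain ⟨c, hc, d, hd, hcd⟩ := Finset.one_lt_card.1 h
  obtain ⟨⟨s, t⟩, hst, hmax⟩ := Finset.exists_max_image
    ((Finset.univ.filter fun v => deg G v ≠ 1) ×ˢ (Finset.univ.filter fun v => deg G v ≠ 1))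
    (fun x => G.dist x.1 x.2) ⟨(c, d), Finset.mem_product.2 ⟨hc, hd⟩⟩
  have hne : s ≠ t := by
    rintro rfl
    have h1 := hmax (c, d) (Finset.mem_product.2 ⟨hc, hd⟩)
    have h2 := hT.1.pos_dist_of_ne hcd
    simp only [SimpleGraph.dist_self] at h1
    omega
  simp only [Finset.mem_product, Finset.mem_filter, Finset.mem_univ, true_and,
    Prod.forall, and_imp] at hst hmax
  have key : ∀ s t, s ≠ t → deg G s ≠ 1 → deg G t ≠ 1 →
      (∀ z, deg G z ≠ 1 → G.dist z t ≤ G.dist s t) → ∃ s', IsStarEnd G s t s' := by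
    intro s t hne hs ht hmax
    obtain ⟨s', hs', hd⟩ := exists_parent hT.1 hne
    refine ⟨s', hs, hs', fun z hz hzs => ?_, deg_parent_ne_one hT.1 ht hs' hd, hd⟩
    by_contra hz1
    have h1 := hmax z hz1
    rcases dist_adj_cases hT t hz with h2 | h2
    · exact hzs (parent_unique hT hz hs' h2.symm hd)
    · omega
  obtain ⟨s', hs'⟩ := key s t hne hst.1 hst.2 fun z hz => hmax z t hz hst.2
  obtain ⟨t', ht'⟩ := key t s hne.symm hst.2 hst.1 fun z hz => by
    rw [G.dist_comm (u := z), G.dist_comm (u := t)]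
    exact hmax s z hst.1 hz
  exact ⟨s, t, s', t', hne, hs', ht'⟩

namespace IsStarEnd

variable {s t s' t' : V}

lemma two_le_deg (h : IsStarEnd G s t s') : 2 ≤ deg G s := by
  have h1 := one_le_deg h.adj
  have h2 := h.deg_ne_one
  omega

lemma card_pendent (h : IsStarEnd G s t s') :
    (Finset.univ.filter fun z => G.Adj s z ∧ deg G z = 1).card + 1 = deg G s := by
  have : (Finset.univ.filter fun z => G.Adj s z ∧ deg G z = 1) =
      (Finset.univ.filter fun z => G.Adj s z).erase s' := by
    ext z
    simp only [Finset.mem_filter, Finset.mem_univ, true_and, Finset.mem_erase]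
    constructor
    · rintro ⟨h1, h2⟩
      refine ⟨?_, h1⟩
      rintro rfl
      exact h.deg_next_ne_one h2
    · rintro ⟨h1, h2⟩
      exact ⟨h2, h.deg_eq_one z h2 h1⟩
  rw [this, Finset.card_erase_add_one (by simpa using h.adj), deg]

lemma side_eq (h : IsStarEnd G s t s') (hG : G.Connected) : side G s s' = deg G s :=
  side_eq_deg hG h.adj h.deg_eq_one

lemma mu_eq (h : IsStarEnd G s t s') (hT : G.IsTree) :
    mu G s s' = min (deg G s) (Fintype.card V - deg G s) := by
  have h1 := h.side_eq hT.1
  have h2 := side_add_side hT h.adj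
  unfold mu
  omega

end IsStarEnd

lemma disjoint_pendent {s t : V} (hne : s ≠ t) :
    Disjoint (Finset.univ.filter fun z => G.Adj s z ∧ deg G z = 1)
      (Finset.univ.filter fun z => G.Adj t z ∧ deg G z = 1) := by
  rw [Finset.disjoint_left]
  intro z hz hz'
  simp only [Finset.mem_filter, Finset.mem_univ, true_and] at hz hz'
  exact hne (eq_of_deg_eq_one hz.2 hz.1.symm hz'.1.symm)

lemma pendent_union_subset (s t : V) :
    (Finset.univ.filter fun z => G.Adj s z ∧ deg G z = 1) ∪
      (Finset.univ.filter fun z => G.Adj t z ∧ deg G z = 1) ⊆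
      Finset.univ.filter fun z => deg G z = 1 := by
  intro z hz
  simp only [Finset.mem_union, Finset.mem_filter, Finset.mem_univ, true_and] at hz ⊢
  rcases hz with hz | hz <;> exact hz.2

lemma deg_add_deg_le {s t s' t' : V} (hne : s ≠ t) (hs : IsStarEnd G s t s')
    (ht : IsStarEnd G t s t') :
    deg G s + deg G t ≤ (Finset.univ.filter fun z => deg G z = 1).card + 2 := by
  have h1 := Finset.card_le_card (pendent_union_subset (G := G) s t)
  rw [Finset.card_union_of_disjoint (disjoint_pendent hne)] at h1
  have h2 := hs.card_pendent
  have h3 := ht.card_pendent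
  omega

lemma adj_or_adj_of_deg_eq_one {s t s' t' : V} (hne : s ≠ t) (hs : IsStarEnd G s t s')
    (ht : IsStarEnd G t s t')
    (hdeg : deg G s + deg G t = (Finset.univ.filter fun z => deg G z = 1).card + 2)
    {z : V} (hz : deg G z = 1) : G.Adj s z ∨ G.Adj t z := by
  have h2 := hs.card_pendent
  have h3 := ht.card_pendent
  have h1 := Finset.eq_of_subset_of_card_le (pendent_union_subset (G := G) s t) (by
    rw [Finset.card_union_of_disjoint (disjoint_pendent hne)]
    omega)
  have : z ∈ Finset.univ.filter fun z => deg G z = 1 := by simpa using hz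
  rw [← h1] at this
  simp only [Finset.mem_union, Finset.mem_filter, Finset.mem_univ, true_and] at this
  exact this.imp And.left And.left

lemma sum_deg (hT : G.IsTree) : ∑ v, deg G v + 2 = 2 * Fintype.card V := by
  have h : ∀ v, deg G v = G.degree v := by
    intro v
    rw [← G.card_neighborFinset_eq_degree]
    unfold deg
    congr 1
    ext w
    simp
  simp_rw [h]
  rw [G.sum_degrees_eq_twice_card_edges, ← hT.card_edgeFinset]
  ring

lemma deg_le_two_of_ne (hT : G.IsTree) {s t s' t' w : V} (hne : s ≠ t)
    (hs : IsStarEnd G s t s') (ht : IsStarEnd G t s t')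
    (hdeg : deg G s + deg G t = (Finset.univ.filter fun z => deg G z = 1).card + 2)
    (hws : w ≠ s) (hwt : w ≠ t) : deg G w ≤ 2 := by
  have hsum := sum_deg hT
  have hs2 := hs.two_le_deg
  have ht2 := ht.two_le_deg
  have hle : ∑ v, (2 + (if v = s then deg G s - 2 else 0) + (if v = t then deg G t - 2 else 0) +
      (if v = w then deg G w - 2 else 0)) ≤ ∑ v, (deg G v + if deg G v = 1 then 1 else 0) := by
    refine Finset.sum_le_sum fun v _ => ?_
    have hv : 1 ≤ deg G v := by
      obtain ⟨u, hu⟩ : ∃ u, v ≠ u := by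
        rcases eq_or_ne v s with rfl | h
        · exact ⟨t, hne⟩
        · exact ⟨s, h⟩
      obtain ⟨p, hp, -⟩ := exists_parent hT.1 hu
      exact one_le_deg hp
    split_ifs <;> subst_vars <;> first | contradiction | omega
  simp only [Finset.sum_add_distrib, Finset.sum_ite_eq', Finset.mem_univ, if_true,
    Finset.sum_const, Finset.card_univ, smul_eq_mul, Finset.sum_boole, Nat.cast_id] at hle
  omega

/-- The non-pendent vertices are determined by their distance to `s`. -/
lemma eq_of_dist_eq (hT : G.IsTree) {s t s' t' : V} (hs : IsStarEnd G s t s')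
    (ht : IsStarEnd G t s t') (hdeg : ∀ w, w ≠ s → w ≠ t → deg G w ≤ 2) :
    ∀ j w w', deg G w ≠ 1 → deg G w' ≠ 1 → G.dist w s = j → G.dist w' s = j → w = w' := by
  intro j
  induction j with
  | zero =>
    intro w w' _ _ h h'
    rw [hT.1.dist_eq_zero_iff.1 h, hT.1.dist_eq_zero_iff.1 h']
  | succ j ih =>
    intro w w' hw hw' h h'
    have hws : ∀ x, G.dist x s = j + 1 → x ≠ s := by
      rintro x hx rfl
      simp at hx
    obtain ⟨p, hp, hpd⟩ := exists_parent hT.1 (hws w h)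
    obtain ⟨p', hp', hpd'⟩ := exists_parent hT.1 (hws w' h')
    obtain rfl := ih p p' (deg_parent_ne_one hT.1 hs.deg_ne_one hp hpd)
      (deg_parent_ne_one hT.1 hs.deg_ne_one hp' hpd') (by omega) (by omega)
    have hend : ∀ {x y x' : V}, IsStarEnd G x y x' → G.Adj w x → G.Adj w' x → w = w' := by
      intro x y x' hx h1 h2
      rw [not_imp_comm.1 (hx.deg_eq_one w h1.symm) hw,
        not_imp_comm.1 (hx.deg_eq_one w' h2.symm) hw']
    rcases eq_or_ne p s with rfl | hps
    · exact hend hs hp hp'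
    rcases eq_or_ne p t with rfl | hpt
    · exact hend ht hp hp'
    obtain ⟨c, hc, hcd⟩ := exists_parent hT.1 hps
    by_contra hne
    have h3 : ({w, w', c} : Finset V).card ≤ deg G p := by
      refine Finset.card_le_card fun x hx => ?_
      simp only [Finset.mem_insert, Finset.mem_singleton] at hx
      simp only [Finset.mem_filter, Finset.mem_univ, true_and]
      rcases hx with rfl | rfl | rfl
      exacts [hp.symm, hp'.symm, hc]
    rw [Finset.card_eq_three.2 ⟨w, w', c, hne, by rintro rfl; omega, by rintro rfl; omega, rfl⟩]
      at h3
    have := hdeg p hps hpt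
    omega

/-- The distances from `s` to the non-pendent vertices are `0, 1, …`, the largest one
being attained at `t`. -/
lemma dist_nonpendent (hT : G.IsTree) {s t s' t' : V} (hs : IsStarEnd G s t s')
    (ht : IsStarEnd G t s t') (hdeg : ∀ w, w ≠ s → w ≠ t → deg G w ≤ 2) :
    (∀ w, deg G w ≠ 1 → G.dist w s < (Finset.univ.filter fun v => deg G v ≠ 1).card) ∧
      G.dist t s + 1 = (Finset.univ.filter fun v => deg G v ≠ 1).card := by
  have hinj := eq_of_dist_eq hT hs ht hdeg
  have hpar : ∀ w, deg G w ≠ 1 → 0 < G.dist w s →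
      ∃ p, deg G p ≠ 1 ∧ G.Adj w p ∧ G.dist p s + 1 = G.dist w s := by
    intro w hw h
    obtain ⟨p, hp, hpd⟩ := exists_parent hT.1 (w := w) (ρ := s) (by rintro rfl; simp at h)
    exact ⟨p, deg_parent_ne_one hT.1 hs.deg_ne_one hp hpd, hp, hpd⟩
  have hle : ∀ w, deg G w ≠ 1 → G.dist w s ≤ G.dist t s := by
    by_contra! hcon
    obtain ⟨w, hw, hwt⟩ := hcon
    have hdown : ∀ j, G.dist t s < G.dist w s - j →
        ∃ x, deg G x ≠ 1 ∧ G.dist x s = G.dist w s - j := by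
      intro j
      induction j with
      | zero => exact fun _ => ⟨w, hw, rfl⟩
      | succ j ih =>
        intro h
        obtain ⟨x, hx, hxd⟩ := ih (by omega)
        obtain ⟨p, hp, -, hpd⟩ := hpar x hx (by omega)
        exact ⟨p, hp, by omega⟩
    obtain ⟨x, hx, hxd⟩ := hdown (G.dist w s - G.dist t s - 1) (by omega)
    obtain ⟨p, hp, hxp, hpd⟩ := hpar x hx (by omega)
    obtain rfl := hinj _ p t hp ht.deg_ne_one rfl (by omega)
    obtain rfl := not_imp_comm.1 (ht.deg_eq_one x hxp.symm) hx
    have := ht.dist_next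
    omega
  have himg : (Finset.univ.filter fun v => deg G v ≠ 1).image (fun w => G.dist w s) =
      Finset.range (G.dist t s + 1) := by
    ext j
    simp only [Finset.mem_image, Finset.mem_filter, Finset.mem_univ, true_and, Finset.mem_range]
    constructor
    · rintro ⟨w, hw, rfl⟩
      exact Nat.lt_succ_of_le (hle w hw)
    · intro hj
      have hdown : ∀ i ≤ G.dist t s, ∃ x, deg G x ≠ 1 ∧ G.dist x s = G.dist t s - i := by
        intro i
        induction i with
        | zero => exact fun _ => ⟨t, ht.deg_ne_one, rfl⟩
        | succ i ih =>
          intro h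
          obtain ⟨x, hx, hxd⟩ := ih (by omega)
          obtain ⟨p, hp, -, hpd⟩ := hpar x hx (by omega)
          exact ⟨p, hp, by omega⟩
      obtain ⟨x, hx, hxd⟩ := hdown (G.dist t s - j) (by omega)
      exact ⟨x, hx, by omega⟩
  have hcard := congrArg Finset.card himg
  rw [Finset.card_range, Finset.card_image_of_injOn] at hcard
  · exact ⟨fun w hw => by have := hle w hw; omega, hcard.symm⟩
  · intro x hx y hy hxy
    exact hinj _ x y (by simpa using hx) (by simpa using hy) rfl hxy.symm

/-- The labelling of the vertices underlying the isomorphism with a double star path. -/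
lemma exists_labelling (hT : G.IsTree) {s t s' t' : V} {a b : ℕ} (hne : s ≠ t)
    (hs : IsStarEnd G s t s') (ht : IsStarEnd G t s t') (hsa : deg G s = a + 1)
    (htb : deg G t = b + 1) (hq : (Finset.univ.filter fun z => deg G z = 1).card = a + b) :
    ∃ f : V → ℕ, Function.Injective f ∧ f s = a ∧ f t + 1 + b = Fintype.card V ∧
      ∀ w, (deg G w = 1 ∧ G.Adj s w ∧ f w < a) ∨
        (deg G w = 1 ∧ G.Adj t w ∧ Fintype.card V ≤ f w + b ∧ f w < Fintype.card V) ∨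
        (deg G w ≠ 1 ∧ f w = a + G.dist w s ∧ f w + b < Fintype.card V) := by
  have hsum : deg G s + deg G t = (Finset.univ.filter fun z => deg G z = 1).card + 2 := by omega
  have hdeg : ∀ w, w ≠ s → w ≠ t → deg G w ≤ 2 := fun w =>
    deg_le_two_of_ne hT hne hs ht hsum
  have hleaf : ∀ z, deg G z = 1 → G.Adj s z ∨ G.Adj t z := fun z =>
    adj_or_adj_of_deg_eq_one hne hs ht hsum
  have hinj : ∀ w w', deg G w ≠ 1 → deg G w' ≠ 1 → G.dist w s = G.dist w' s → w = w' :=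
    fun w w' hw hw' h => eq_of_dist_eq hT hs ht hdeg _ w w' hw hw' h rfl
  obtain ⟨hlt, hts⟩ := dist_nonpendent hT hs ht hdeg
  have hcard : (Finset.univ.filter fun v => deg G v ≠ 1).card + (a + b) = Fintype.card V := by
    rw [← hq, add_comm, Finset.card_filter_add_card_filter_not, Finset.card_univ]
  have hca := hs.card_pendent
  have hcb := ht.card_pendent
  have hdts := hT.1.pos_dist_of_ne hne.symm
  obtain ⟨eS, heS, heS'⟩ := exists_injOn_lt_card
    (Finset.univ.filter fun z => G.Adj s z ∧ deg G z = 1)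
  obtain ⟨eT, heT, heT'⟩ := exists_injOn_lt_card
    (Finset.univ.filter fun z => G.Adj t z ∧ deg G z = 1)
  simp only [Finset.mem_filter, Finset.mem_univ, true_and, and_imp] at heS heS' heT heT'
  set K := (Finset.univ.filter fun v => deg G v ≠ 1).card
  have hst : ∀ z, deg G z = 1 → G.Adj s z → ¬ G.Adj t z := fun z hz h1 h2 =>
    hne (eq_of_deg_eq_one hz h1.symm h2.symm)
  let f : V → ℕ := fun w => if deg G w = 1 then (if G.Adj s w then eS w else a + K + eT w)
    else a + G.dist w s
  have hf : ∀ w, (deg G w = 1 ∧ G.Adj s w ∧ f w = eS w ∧ f w < a) ∨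
      (deg G w = 1 ∧ G.Adj t w ∧ f w = a + K + eT w ∧ a + K ≤ f w ∧ f w < a + K + b) ∨
      (deg G w ≠ 1 ∧ f w = a + G.dist w s ∧ a ≤ f w ∧ f w < a + K) := by
    intro w
    by_cases hw : deg G w = 1
    · rcases hleaf w hw with h | h
      · have := heS w h hw
        have hfw : f w = eS w := by simp [f, hw, h]
        exact Or.inl ⟨hw, h, hfw, by omega⟩
      · have := heT w h hw
        have hfw : f w = a + K + eT w := by
          simp [f, hw, show ¬ G.Adj s w from fun h' => hst w hw h' h]
        exact Or.inr (Or.inl ⟨hw, h, hfw, by omega, by omega⟩)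
    · have := hlt w hw
      have hfw : f w = a + G.dist w s := by simp [f, hw]
      exact Or.inr (Or.inr ⟨hw, hfw, by omega, by omega⟩)
  have hfs : f s = a := by simp [f, hs.deg_ne_one]
  have hft : f t = a + K - 1 := by
    have : f t = a + G.dist t s := by simp [f, ht.deg_ne_one]
    omega
  clear_value f K
  refine ⟨f, fun x y hxy => ?_, hfs, by omega, fun w => ?_⟩
  · rcases hf x with ⟨h1, h2, h3, h4⟩ | ⟨h1, h2, h3, h4⟩ | ⟨h1, h3, h4⟩ <;>
    rcases hf y with ⟨k1, k2, k3, k4⟩ | ⟨k1, k2, k3, k4⟩ | ⟨k1, k3, k4⟩ <;>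
    first
    | omega
    | exact heS' x h2 h1 y k2 k1 (by omega)
    | exact heT' x h2 h1 y k2 k1 (by omega)
    | exact hinj x y h1 k1 (by omega)
  · rcases hf w with ⟨h1, h2, h3, h4⟩ | ⟨h1, h2, h3, h4, h5⟩ | ⟨h1, h3, h4, h5⟩
    · exact Or.inl ⟨h1, h2, h4⟩
    · exact Or.inr (Or.inl ⟨h1, h2, by omega, by omega⟩)
    · exact Or.inr (Or.inr ⟨h1, h3, by omega⟩)

/-- A tree whose pendent vertices all hang at `s` and `t` is a double star path. -/
lemma nonempty_iso_doubleStar (hT : G.IsTree) {s t s' t' : V} {a b : ℕ} (hne : s ≠ t)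
    (hs : IsStarEnd G s t s') (ht : IsStarEnd G t s t') (hsa : deg G s = a + 1)
    (htb : deg G t = b + 1) (hq : (Finset.univ.filter fun z => deg G z = 1).card = a + b) :
    Nonempty (G ≃g doubleStar (Fintype.card V) a b) := by
  obtain ⟨f, hfinj, hfs, hft, hf⟩ := exists_labelling hT hne hs ht hsa htb hq
  have hdeg : ∀ w, w ≠ s → w ≠ t → deg G w ≤ 2 := fun w =>
    deg_le_two_of_ne hT hne hs ht (by omega)
  have hat : a ≤ f t := by
    have := hf t
    have := ht.deg_ne_one
    omega
  have hfn : ∀ x, f x < Fintype.card V := by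
    intro x
    have := hf x
    have := hf s
    omega
  let F : V → Fin (Fintype.card V) := fun x => ⟨f x, hfn x⟩
  have hF : Function.Bijective F := by
    rw [Fintype.bijective_iff_injective_and_card]
    exact ⟨fun x y h => hfinj (Fin.ext_iff.1 h), by simp⟩
  have hforward : ∀ x y, G.Adj x y → (doubleStar (Fintype.card V) a b).Adj (F x) (F y) := by
    intro x y hxy
    have hne' : f x ≠ f y := fun h => hxy.ne (hfinj h)
    rw [doubleStar_adj, ne_eq, Fin.ext_iff]
    have hFx : (F x : ℕ) = f x := rfl
    have hFy : (F y : ℕ) = f y := rfl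
    rw [hFx, hFy]
    refine ⟨hne', ?_⟩
    clear_value F
    rcases hf x with h | h | h
    · obtain rfl := eq_of_deg_eq_one h.1 hxy h.2.1.symm
      exact Or.inl (Or.inl ⟨h.2.2, hfs⟩)
    · obtain rfl := eq_of_deg_eq_one h.1 hxy h.2.1.symm
      exact Or.inr (Or.inr (Or.inr (by omega)))
    · rcases hf y with h' | h' | h'
      · obtain rfl := eq_of_deg_eq_one h'.1 hxy.symm h'.2.1.symm
        exact Or.inr (Or.inl ⟨h'.2.2, hfs⟩)
      · obtain rfl := eq_of_deg_eq_one h'.1 hxy.symm h'.2.1.symm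
        exact Or.inl (Or.inr (Or.inr (by omega)))
      · rcases dist_adj_cases hT s hxy with hd | hd
        · exact Or.inr (Or.inr (Or.inl (by omega)))
        · exact Or.inl (Or.inr (Or.inl (by omega)))
  have hback : ∀ x y, ((f x < a ∧ f y = a) ∨
      (a ≤ f x ∧ f x + 1 = f y ∧ f y < Fintype.card V - b) ∨
      (f x = Fintype.card V - b - 1 ∧ Fintype.card V - b ≤ f y)) → G.Adj x y := by
    rintro x y (⟨h1, h2⟩ | ⟨h1, h2, h3⟩ | ⟨h1, h2⟩)
    · obtain rfl := @hfinj y s (h2.trans hfs.symm)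
      rcases hf x with h | h | h
      · exact h.2.1.symm
      · omega
      · omega
    · obtain ⟨hx, hx'⟩ : deg G x ≠ 1 ∧ f x = a + G.dist x s := by
        have := hf x
        constructor <;> omega
      obtain ⟨hy, hy'⟩ : deg G y ≠ 1 ∧ f y = a + G.dist y s := by
        have := hf y
        constructor <;> omega
      obtain ⟨p, hp, hpd⟩ := exists_parent hT.1 (w := y) (ρ := s) (by
        rintro rfl
        omega)
      obtain rfl := eq_of_dist_eq hT hs ht hdeg _ p x
        (deg_parent_ne_one hT.1 hs.deg_ne_one hp hpd) hx rfl (by omega)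
      exact hp.symm
    · obtain rfl := @hfinj x t (by omega)
      rcases hf y with h | h | h
      · omega
      · exact h.2.1
      · omega
  refine ⟨⟨Equiv.ofBijective F hF, fun {x y} => ⟨fun h => ?_, hforward x y⟩⟩⟩
  rcases (doubleStar_adj.1 h).2 with h | h
  · exact hback x y h
  · exact (hback y x h).symm

end Structure

lemma IsStarEnd.lt_deg [Fintype V] {G : SimpleGraph V} {s t s' t' : V} {a q : ℕ}
    (hT : G.IsTree) (hne : s ≠ t) (hs : IsStarEnd G s t s') (ht : IsStarEnd G t s t')
    (hq : (Finset.univ.filter fun v => deg G v = 1).card = q) (hn : q + 2 ≤ Fintype.card V)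
    (ha : 2 * a ≤ q) (hr : ∀ i, 2 ≤ i → i ≤ a → r G i = 0) : a + 1 ≤ deg G s := by
  by_contra hlt
  have h1 := deg_add_deg_le hne hs ht
  have h2 := hs.two_le_deg
  have h3 := ht.two_le_deg
  have h4 := hs.mu_eq hT
  have h5 := Finset.card_eq_zero.1 (hr (deg G s) h2 (by omega))
  have h6 : s(s, s') ∈ Finset.univ.filter fun e : Sym2 V => e ∈ G.edgeSet ∧ muE G e = deg G s := by
    simp only [Finset.mem_filter, Finset.mem_univ, true_and, muE_mk, SimpleGraph.mem_edgeSet]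
    exact ⟨hs.adj, by omega⟩
  rw [h5] at h6
  simp at h6

lemma nonempty_iso_of_r [Fintype V] {G : SimpleGraph V} (hT : G.IsTree) {a b : ℕ}
    (hab : b = a ∨ b = a + 1) (hn : a + b + 2 ≤ Fintype.card V)
    (hq : (Finset.univ.filter fun v => deg G v = 1).card = a + b)
    (hr : ∀ i, 2 ≤ i → i ≤ a → r G i = 0) (hr1 : b = a + 1 → r G (a + 1) ≤ 1) :
    Nonempty (G ≃g doubleStar (Fintype.card V) a b) := by
  have hcard : (Finset.univ.filter fun v => deg G v ≠ 1).card + (a + b) = Fintype.card V := by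
    rw [← hq, add_comm, Finset.card_filter_add_card_filter_not, Finset.card_univ]
  obtain ⟨s, t, s', t', hne, hs, ht⟩ := exists_isStarEnd hT (by omega)
  have h1 := hs.lt_deg hT hne ht hq hn (by omega) hr
  have h2 := ht.lt_deg hT hne.symm hs hq hn (by omega) hr
  have h3 := deg_add_deg_le hne hs ht
  obtain h | h | ⟨hs1, ht1, hb⟩ : (deg G s = a + 1 ∧ deg G t = b + 1) ∨
      (deg G t = a + 1 ∧ deg G s = b + 1) ∨ (deg G s = a + 1 ∧ deg G t = a + 1 ∧ b = a + 1) := by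
    omega
  · exact nonempty_iso_doubleStar hT hne hs ht h.1 h.2 hq
  · exact nonempty_iso_doubleStar hT hne.symm ht hs h.1 h.2 hq
  · exfalso
    have h4 := hs.mu_eq hT
    have h5 := ht.mu_eq hT
    have h6 := Finset.card_le_one.1 (hr1 hb) s(s, s') (by
      simp only [Finset.mem_filter, Finset.mem_univ, true_and, muE_mk, SimpleGraph.mem_edgeSet]
      exact ⟨hs.adj, by omega⟩) s(t, t') (by
      simp only [Finset.mem_filter, Finset.mem_univ, true_and, muE_mk, SimpleGraph.mem_edgeSet]
      exact ⟨ht.adj, by omega⟩)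
    rcases Sym2.eq_iff.1 h6 with h7 | ⟨rfl, rfl⟩
    · exact hne h7.1
    · have h8 := hs.side_eq hT.1
      have h9 := ht.side_eq hT.1
      have h10 := side_add_side hT hs.adj
      omega

/-- Let `T` be a tree on `n` vertices with exactly `q` pendent vertices,
`2 < q < n − 1`. Then `T ⪯ CP_{n;⌊q/2⌋,⌈q/2⌉}`, and `r(T) = r(CP_{n;⌊q/2⌋,⌈q/2⌉})` iff
`T` is isomorphic to `CP_{n;⌊q/2⌋,⌈q/2⌉}`. -/
theorem stmt16 {V : Type*} [Fintype V] (G : SimpleGraph V) (hT : G.IsTree) (q : ℕ)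
    (hq : (Finset.univ.filter fun v => deg G v = 1).card = q)
    (hq2 : 2 < q) (hqn : q < Fintype.card V - 1) :
    Preceq (Fintype.card V) G (doubleStar (Fintype.card V) (q / 2) ((q + 1) / 2)) ∧
    (SameEdgeDivision (Fintype.card V) G
        (doubleStar (Fintype.card V) (q / 2) ((q + 1) / 2)) ↔
      Nonempty (G ≃g doubleStar (Fintype.card V) (q / 2) ((q + 1) / 2))) := by
  have hn : q / 2 + (q + 1) / 2 + 2 ≤ Fintype.card V := by omega
  have hq' : (Finset.univ.filter fun v => deg G v = 1).card = q / 2 + (q + 1) / 2 := by omega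
  refine ⟨preceq_doubleStar hT (by omega) (by omega) hn hq', fun h => ?_, fun ⟨φ⟩ i _ _ => ?_⟩
  · refine nonempty_iso_of_r hT (by omega) hn hq' (fun i hi hia => ?_) fun hb => ?_
    · rw [h i (by omega) (by omega)]
      exact r_doubleStar_eq_zero hn (by omega) hi hia
    · rw [h (q / 2 + 1) (by omega) (by omega), hb]
      exact r_doubleStar_le_one (by omega) (by omega)
  · exact r_iso φ hT.1 i

end TreeOrder
end

section
/- Let T be a tree on n vertices with exactly q pendent vertices, where 2 < q < n − 1. Then T ⪰ SP_{n,q}, and r(T) = r(SP_{n,q}) if and only if T is isomorphic to SP_{n,q}. -/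
namespace TreeOrder

attribute [local instance] Classical.propDecidable

variable {V : Type*} {W : Type*}

/-- `G` is the tree with root `c` in which every vertex `v ≠ c` is joined to its parent `p v`;
the function `d` decreases towards the root. -/
structure Rooted (G : SimpleGraph V) (c : V) (p : V → V) (d : V → ℕ) : Prop where
  root : p c = c
  depth : ∀ v, v ≠ c → d (p v) < d v
  adj : ∀ x y, G.Adj x y ↔ (x ≠ c ∧ y = p x) ∨ (y ≠ c ∧ x = p y)

/-- The number of descendants of `v` (including `v`) for the parent function `p`. -/
noncomputable def descCard [Fintype V] (p : V → V) (v : V) : ℕ :=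
  (Finset.univ.filter fun w => ∃ k, p^[k] w = v).card

/-- If `uv` is the only edge leaving `S`, then the vertices of `S` are closer to `u`. -/
theorem dist_lt_of_unique_boundary_edge {G : SimpleGraph V} (hG : G.Connected) {S : V → Prop}
    {a b : V} (hb : ¬ S b) (hS : ∀ x y, S x → ¬ S y → G.Adj x y → x = a ∧ y = b) {x : V}
    (hx : S x) : G.dist x a < G.dist x b := by
  have key : ∀ {x y : V} (W : G.Walk x y), S x → ¬ S y → G.dist x a + 1 ≤ W.length := by
    intro x y W
    induction W with
    | nil => intro h h'; exact absurd h h'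
    | @cons u v w h W ih =>
      intro hu hw
      rw [SimpleGraph.Walk.length_cons]
      by_cases hv : S v
      · have h1 := ih hv hw
        have h2 := hG.dist_triangle (u := u) (v := v) (w := a)
        have h3 := SimpleGraph.dist_eq_one_iff_adj.mpr h
        omega
      · obtain ⟨rfl, -⟩ := hS u v hu hv h
        simp
  obtain ⟨W, hW⟩ := hG.exists_walk_length_eq_dist x b
  have := key W hx hb
  omega

namespace Rooted

variable {G : SimpleGraph V} {c : V} {p : V → V} {d : V → ℕ}

theorem reachable_root (h : Rooted G c p d) (v : V) : G.Reachable v c := by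
  induction hn : d v using Nat.strong_induction_on generalizing v with
  | _ n ih =>
    by_cases hv : v = c
    · rw [hv]
    · have h1 : G.Adj v (p v) := (h.adj _ _).2 (Or.inl ⟨hv, rfl⟩)
      exact h1.reachable.trans (ih _ (hn ▸ h.depth v hv) _ rfl)

theorem connected (h : Rooted G c p d) : G.Connected :=
  have : Nonempty V := ⟨c⟩
  ⟨fun u v => (h.reachable_root u).trans (h.reachable_root v).symm⟩

theorem depth_iterate_le (h : Rooted G c p d) (k : ℕ) (v : V) : d (p^[k] v) ≤ d v := by
  induction k generalizing v with
  | zero => exact le_rfl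
  | succ k ih =>
    rw [Function.iterate_succ_apply]
    refine (ih _).trans ?_
    by_cases hv : v = c
    · rw [hv, h.root]
    · exact (h.depth v hv).le

theorem parent_not_desc (h : Rooted G c p d) {v : V} (hv : v ≠ c) :
    ¬ ∃ k, p^[k] (p v) = v := by
  rintro ⟨k, hk⟩
  have h1 := h.depth_iterate_le k (p v)
  have h2 := h.depth v hv
  rw [hk] at h1
  omega

theorem boundary (h : Rooted G c p d) {v : V} (x y : V)
    (hx : ∃ k, p^[k] x = v) (hy : ¬ ∃ k, p^[k] y = v) (hxy : G.Adj x y) : x = v ∧ y = p v := by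
  obtain ⟨k, hk⟩ := hx
  rcases (h.adj _ _).1 hxy with ⟨-, rfl⟩ | ⟨-, rfl⟩
  · cases k with
    | zero => exact ⟨hk, congrArg p hk⟩
    | succ k => exact absurd ⟨k, hk⟩ hy
  · exact absurd ⟨k + 1, hk⟩ hy

theorem dist_lt_iff (h : Rooted G c p d) {v : V} (hv : v ≠ c) (w : V) :
    G.dist w v < G.dist w (p v) ↔ ∃ k, p^[k] w = v := by
  constructor
  · intro hlt
    by_contra hw
    have := dist_lt_of_unique_boundary_edge (S := fun w => ¬ ∃ k, p^[k] w = v) h.connected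
      (a := p v) (b := v) (not_not.2 ⟨0, rfl⟩)
      (fun x y hx hy hxy => (h.boundary y x (not_not.1 hy) hx hxy.symm).symm) hw
    omega
  · exact fun hw => dist_lt_of_unique_boundary_edge h.connected (h.parent_not_desc hv)
      h.boundary hw

theorem lt_dist_iff (h : Rooted G c p d) {v : V} (hv : v ≠ c) (w : V) :
    G.dist w (p v) < G.dist w v ↔ ¬ ∃ k, p^[k] w = v := by
  constructor
  · intro hlt hw
    have := (h.dist_lt_iff hv w).2 hw
    omega
  · exact fun hw => dist_lt_of_unique_boundary_edge (S := fun w => ¬ ∃ k, p^[k] w = v)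
      h.connected (not_not.2 ⟨0, rfl⟩)
      (fun x y hx hy hxy => (h.boundary y x (not_not.1 hy) hx hxy.symm).symm) hw

variable [Fintype V]

theorem side_parent (h : Rooted G c p d) {v : V} (hv : v ≠ c) :
    side G v (p v) = descCard p v := by
  unfold side descCard
  congr 1
  ext w
  simp only [Finset.mem_filter, h.dist_lt_iff hv]

theorem side_add_descCard (h : Rooted G c p d) {v : V} (hv : v ≠ c) :
    side G (p v) v + descCard p v = Fintype.card V := by
  unfold side descCard
  simp only [h.lt_dist_iff hv]
  rw [add_comm, Finset.card_filter_add_card_filter_not, Finset.card_univ]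

theorem descCard_lt (h : Rooted G c p d) {v : V} (hv : v ≠ c) :
    descCard p v < descCard p (p v) := by
  refine Finset.card_lt_card ((Finset.ssubset_iff_of_subset ?_).2 ⟨p v, ?_, ?_⟩)
  · intro w hw
    simp only [Finset.mem_filter, Finset.mem_univ, true_and] at hw ⊢
    obtain ⟨k, rfl⟩ := hw
    exact ⟨k + 1, Function.iterate_succ_apply' _ _ _⟩
  · simpa using ⟨0, rfl⟩
  · simpa using h.parent_not_desc hv

theorem descCard_add_two_le (h : Rooted G c p d) {u v : V} (hu : u ≠ c) (hv : v ≠ c)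
    (huv : u ≠ v) (hp : p u = p v) : descCard p u + 2 ≤ descCard p (p u) := by
  have h1 : p u ∉ Finset.univ.filter fun w => ∃ k, p^[k] w = u := by
    simpa using h.parent_not_desc hu
  have h2 : v ∉ insert (p u) (Finset.univ.filter fun w => ∃ k, p^[k] w = u) := by
    simp only [Finset.mem_insert, Finset.mem_filter, Finset.mem_univ, true_and, not_or]
    refine ⟨fun e => ?_, ?_⟩
    · have := h.depth v hv
      rw [← hp, ← e] at this
      omega
    · rintro ⟨k, hk⟩
      cases k with
      | zero => exact huv hk.symm
      | succ k => exact h.parent_not_desc hu ⟨k, by rw [hp]; exact hk⟩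
  have h3 := Finset.card_insert_of_notMem h2
  rw [Finset.card_insert_of_notMem h1] at h3
  unfold descCard
  rw [← Nat.add_assoc _ 1 1, ← h3]
  refine Finset.card_le_card fun w hw => ?_
  simp only [Finset.mem_insert, Finset.mem_filter, Finset.mem_univ, true_and] at hw ⊢
  rcases hw with rfl | rfl | ⟨k, rfl⟩
  · exact ⟨1, hp.symm⟩
  · exact ⟨0, rfl⟩
  · exact ⟨k + 1, Function.iterate_succ_apply' _ _ _⟩

theorem lt_descCard_iterate (h : Rooted G c p d) (k : ℕ) (w : V) (hk : p^[k] w ≠ c) :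
    k < descCard p (p^[k] w) := by
  induction k with
  | zero => exact Finset.card_pos.2 ⟨w, by
      simp only [Finset.mem_filter, Finset.mem_univ, true_and]
      exact ⟨0, rfl⟩⟩
  | succ k ih =>
    rw [Function.iterate_succ_apply'] at hk ⊢
    have h1 : p^[k] w ≠ c := fun e => hk (by rw [e, h.root])
    have h2 := h.descCard_lt h1
    have h3 := ih h1
    omega

/-- Edges correspond to the vertices different from the root. -/
theorem r_eq (h : Rooted G c p d) (hs : ∀ v, v ≠ c → 2 * descCard p v ≤ Fintype.card V)
    (i : ℕ) : r G i = (Finset.univ.filter fun v => v ≠ c ∧ descCard p v = i).card := by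
  have hmu : ∀ v, v ≠ c → muE G s(v, p v) = descCard p v := by
    intro v hv
    have h1 := h.side_add_descCard hv
    have h2 := h.side_parent hv
    have h3 := hs v hv
    change min (side G v (p v)) (side G (p v) v) = _
    omega
  have himg : (Finset.univ.filter fun e : Sym2 V => e ∈ G.edgeSet ∧ muE G e = i) =
      (Finset.univ.filter fun v => v ≠ c ∧ descCard p v = i).image fun v => s(v, p v) := by
    ext e
    simp only [Finset.mem_filter, Finset.mem_univ, true_and, Finset.mem_image]
    constructor
    · induction e with
      | _ x y =>
        rintro ⟨he, hi⟩
        rw [SimpleGraph.mem_edgeSet] at he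
        rcases (h.adj _ _).1 he with ⟨hx, rfl⟩ | ⟨hy, rfl⟩
        · exact ⟨x, ⟨hx, by rw [← hmu x hx, hi]⟩, rfl⟩
        · rw [Sym2.eq_swap] at hi ⊢
          exact ⟨y, ⟨hy, by rw [← hmu y hy, hi]⟩, rfl⟩
    · rintro ⟨v, ⟨hv, hi⟩, rfl⟩
      exact ⟨(h.adj _ _).2 (Or.inl ⟨hv, rfl⟩), by rw [hmu v hv, hi]⟩
  unfold r
  rw [himg, Finset.card_image_of_injOn]
  intro x hx y hy hxy
  simp only [Finset.coe_filter, Finset.mem_univ, true_and, Set.mem_ofPred_eq] at hx hy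
  rcases Sym2.eq_iff.1 hxy with ⟨h1, -⟩ | ⟨h1, h2⟩
  · exact h1
  · have h3 := h.depth x hx.1
    have h4 := h.depth y hy.1
    rw [h2] at h3
    rw [← h1] at h4
    omega

theorem tailSum_eq (h : Rooted G c p d) (hs : ∀ v, v ≠ c → 2 * descCard p v ≤ Fintype.card V)
    (k : ℕ) : tailSum G (Fintype.card V) k =
      (Finset.univ.filter fun v => v ≠ c ∧ k ≤ descCard p v).card := by
  unfold tailSum
  simp only [h.r_eq hs, ← Finset.filter_filter]
  rw [Finset.sum_card_fiberwise_eq_card_filter]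
  simp only [Finset.filter_filter]
  congr 1
  ext v
  simp only [Finset.mem_filter, Finset.mem_univ, true_and, Finset.mem_Icc]
  constructor
  · rintro ⟨h1, h2, -⟩
    exact ⟨h1, h2⟩
  · rintro ⟨h1, h2⟩
    have := hs v h1
    exact ⟨h1, h2, by omega⟩

end Rooted

theorem exists_rooted_at {G : SimpleGraph V} (hT : G.IsTree) (c : V) :
    ∃ p, Rooted G c p fun v => G.dist v c := by
  have hex : ∀ v, ∃ w, v ≠ c → G.Adj v w ∧ G.dist w c < G.dist v c := by
    intro v
    by_cases hv : v = c
    · exact ⟨c, fun h => absurd hv h⟩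
    · obtain ⟨W, hW⟩ := hT.connected.exists_walk_length_eq_dist v c
      cases W with
      | nil => exact absurd rfl hv
      | @cons _ w _ h W =>
        refine ⟨w, fun _ => ⟨h, ?_⟩⟩
        rw [SimpleGraph.Walk.length_cons] at hW
        have := SimpleGraph.dist_le W
        omega
  choose f hf using hex
  have huniq : ∀ x y, G.Adj x y → G.dist y c < G.dist x c → y = f x := by
    intro x y hxy hlt
    have hx : x ≠ c := by rintro rfl; simp at hlt
    obtain ⟨hfx, hfl⟩ := hf x hx
    obtain ⟨P, hP, hPl⟩ := hT.connected.exists_path_of_dist y c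
    obtain ⟨Q, hQ, hQl⟩ := hT.connected.exists_path_of_dist (f x) c
    have aux : ∀ {z : V} (R : G.Walk z c) (hR : R.IsPath) (hRl : R.length = G.dist z c)
        (hz : G.Adj x z) (hzl : G.dist z c < G.dist x c), (R.cons hz).IsPath := by
      intro z R hR hRl hz hzl
      rw [SimpleGraph.Walk.cons_isPath_iff]
      refine ⟨hR, fun hmem => ?_⟩
      have h1 := SimpleGraph.dist_le (R.dropUntil x hmem)
      have h2 := R.length_dropUntil_le_length hmem
      omega
    have h1 := aux P hP hPl hxy hlt
    have h2 := aux Q hQ hQl hfx hfl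
    have h3 := (hT.existsUnique_path x c).unique h1 h2
    simpa using congrArg SimpleGraph.Walk.snd h3
  refine ⟨fun v => if v = c then c else f v, ?_, ?_, ?_⟩
  · simp
  · intro v hv
    simpa [hv] using (hf v hv).2
  · intro x y
    constructor
    · intro hxy
      have hne := hT.dist_ne_of_adj c hxy
      rw [SimpleGraph.dist_comm, SimpleGraph.dist_comm (u := c)] at hne
      rcases lt_or_gt_of_ne hne with hlt | hlt
      · have hy : y ≠ c := by rintro rfl; simp at hlt
        exact Or.inr ⟨hy, by simpa [hy] using huniq y x hxy.symm hlt⟩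
      · have hx : x ≠ c := by rintro rfl; simp at hlt
        exact Or.inl ⟨hx, by simpa [hx] using huniq x y hxy hlt⟩
    · rintro (⟨hx, rfl⟩ | ⟨hy, rfl⟩)
      · simpa [hx] using (hf x hx).1
      · simpa [hy] using (hf y hy).1.symm

/-- Every tree can be rooted at a centroidal vertex. -/
theorem exists_centroidal_rooted [Fintype V] {G : SimpleGraph V} (hT : G.IsTree) :
    ∃ c p d, Rooted G c p d ∧ ∀ v, v ≠ c → 2 * descCard p v ≤ Fintype.card V := by
  have := hT.connected.nonempty
  obtain ⟨c, hc⟩ := Finite.exists_min fun c => ∑ w, G.dist w c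
  obtain ⟨p, h⟩ := exists_rooted_at hT c
  refine ⟨c, p, _, h, ?_⟩
  have hchild : ∀ v, v ≠ c → p v = c → 2 * descCard p v ≤ Fintype.card V := by
    intro v hv hpv
    have hadj : G.Adj v c := (h.adj _ _).2 (Or.inl ⟨hv, hpv.symm⟩)
    have h1 := h.side_add_descCard hv
    have h2 := h.side_parent hv
    rw [hpv] at h1 h2
    have h3 : ∑ w, G.dist w v + side G v c = ∑ w, G.dist w c + side G c v := by
      unfold side
      rw [Finset.card_filter, Finset.card_filter, ← Finset.sum_add_distrib,
        ← Finset.sum_add_distrib]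
      refine Finset.sum_congr rfl fun w _ => ?_
      have := hT.dist_eq_dist_add_one_of_adj w hadj
      split_ifs <;> omega
    have h4 := hc v
    omega
  intro v
  induction hn : G.dist v c using Nat.strong_induction_on generalizing v with
  | _ n ih =>
    intro hv
    by_cases hpv : p v = c
    · exact hchild v hv hpv
    · have h1 := ih _ (hn ▸ h.depth v hv) (p v) rfl hpv
      have h2 := h.descCard_lt hv
      omega

namespace Rooted

variable {G : SimpleGraph V} {c : V} {p : V → V} {d : V → ℕ} [Fintype V]

theorem exists_pendent_desc (h : Rooted G c p d) {v : V} (hv : v ≠ c) :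
    ∃ l, deg G l = 1 ∧ ∃ k, p^[k] l = v := by
  obtain ⟨l, hl, hmax⟩ := Finset.exists_max_image
    (Finset.univ.filter fun w => w ≠ c ∧ ∃ k, p^[k] w = v) d ⟨v, by simpa [hv] using ⟨0, rfl⟩⟩
  simp only [Finset.mem_filter, Finset.mem_univ, true_and] at hl hmax
  obtain ⟨hlc, k, hk⟩ := hl
  refine ⟨l, ?_, k, hk⟩
  unfold deg
  rw [Finset.card_eq_one]
  refine ⟨p l, ?_⟩
  ext w
  simp only [Finset.mem_filter, Finset.mem_univ, true_and, Finset.mem_singleton, h.adj]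
  constructor
  · rintro (⟨-, hw⟩ | ⟨hw, rfl⟩)
    · exact hw
    · have h1 := hmax w ⟨hw, k + 1, hk⟩
      have h2 := h.depth w hw
      omega
  · exact fun hw => Or.inl ⟨hlc, hw⟩

theorem filter_subset_image (h : Rooted G c p d) (m : ℕ) :
    (Finset.univ.filter fun v => v ≠ c ∧ descCard p v ≤ m) ⊆
      ((Finset.univ.filter fun v => deg G v = 1) ×ˢ Finset.range m).image
        fun x => p^[x.2] x.1 := by
  intro v hv
  simp only [Finset.mem_filter, Finset.mem_univ, true_and] at hv
  obtain ⟨l, hl, k, rfl⟩ := h.exists_pendent_desc hv.1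
  have := h.lt_descCard_iterate k l hv.1
  refine Finset.mem_image.2 ⟨(l, k), ?_, rfl⟩
  simp only [Finset.mem_product, Finset.mem_filter, Finset.mem_univ, true_and, Finset.mem_range]
  exact ⟨hl, by omega⟩

theorem card_filter_le (h : Rooted G c p d) (m : ℕ) :
    (Finset.univ.filter fun v => v ≠ c ∧ descCard p v ≤ m).card ≤
      (Finset.univ.filter fun v => deg G v = 1).card * m := by
  refine (Finset.card_le_card (h.filter_subset_image m)).trans (Finset.card_image_le.trans ?_)
  rw [Finset.card_product, Finset.card_range]

theorem card_filter_add_card_filter (c : V) (p : V → V) (m : ℕ) :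
    (Finset.univ.filter fun v => v ≠ c ∧ m + 1 ≤ descCard p v).card +
      (Finset.univ.filter fun v => v ≠ c ∧ descCard p v ≤ m).card = Fintype.card V - 1 := by
  have h1 : (Finset.univ.filter fun v : V => v ≠ c).card = Fintype.card V - 1 := by
    rw [Finset.filter_ne', Finset.card_erase_of_mem (Finset.mem_univ c), Finset.card_univ]
  rw [← h1, ← Finset.card_filter_add_card_filter_not (s := Finset.univ.filter fun v => v ≠ c)
    (fun v => m + 1 ≤ descCard p v), Finset.filter_filter, Finset.filter_filter]
  simp only [Nat.succ_le_iff, not_lt]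

/-- If as many vertices as possible have at most `m` descendants, and all the others
have `m + 1` descendants, then the tree is parametrised like a balanced starlike tree. -/
theorem exists_parametrization (h : Rooted G c p d) {q m R : ℕ}
    (hq : (Finset.univ.filter fun v => deg G v = 1).card = q) (hm : 0 < m)
    (hn : Fintype.card V = m * q + R + 1) (hR : R < q)
    (hcard : (Finset.univ.filter fun v => v ≠ c ∧ descCard p v ≤ m).card = m * q)
    (hle : ∀ v, v ≠ c → descCard p v ≤ m + 1) :
    ∃ L : Fin q → V, (∀ v, v ≠ c → ∃ t k, k * q + t.val < m * q + R ∧ p^[k] (L t) = v) ∧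
      (∀ t, p^[m + 1] (L t) = c) ∧ ∀ t, R ≤ t.val → p^[m] (L t) = c := by
  set A := Finset.univ.filter fun v => deg G v = 1 with hA
  have hsub := h.filter_subset_image m
  have hprod : (A ×ˢ Finset.range m).card = m * q := by
    rw [Finset.card_product, Finset.card_range, hq, mul_comm]
  have himg : ((A ×ˢ Finset.range m).image fun x : V × ℕ => p^[x.2] x.1).card = m * q :=
    le_antisymm (hprod ▸ Finset.card_image_le) (hcard ▸ Finset.card_le_card hsub)
  have heq := Finset.eq_of_subset_of_card_le hsub (by rw [himg, hcard])
  have hinj := Finset.card_image_iff.1 (himg.trans hprod.symm)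
  have hlow : ∀ l ∈ A, ∀ k < m, p^[k] l ≠ c ∧ descCard p (p^[k] l) ≤ m := by
    intro l hl k hk
    have : p^[k] l ∈ (A ×ˢ Finset.range m).image fun x : V × ℕ => p^[x.2] x.1 :=
      Finset.mem_image.2 ⟨(l, k), by simp [hl, hk], rfl⟩
    rw [← heq] at this
    simpa using this
  have htop : ∀ l, p^[m + 1] l = c := by
    intro l
    by_contra hne
    have h1 := h.lt_descCard_iterate (m + 1) l hne
    have h2 := hle _ hne
    omega
  set B := A.filter fun l => p^[m] l ≠ c with hB
  have hBinj : Set.InjOn (fun l => p^[m] l) B := by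
    intro l hl l' hl' hll
    simp only [hB, Finset.coe_filter, Set.mem_ofPred_eq] at hl hl'
    by_contra hne
    obtain ⟨m', rfl⟩ : ∃ m', m = m' + 1 := ⟨m - 1, by omega⟩
    simp only [Function.iterate_succ_apply'] at hll hl hl'
    have h1 := hlow l hl.1 m' (by omega)
    have h1' := hlow l' hl'.1 m' (by omega)
    have h2 : p^[m'] l ≠ p^[m'] l' := fun e => hne (congrArg Prod.fst
      (@hinj (l, m') (by simp [hl.1]) (l', m') (by simp [hl'.1]) e))
    have h3 := h.descCard_add_two_le h1.1 h1'.1 h2 hll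
    have h4 := h.lt_descCard_iterate m' l h1.1
    have h5 := hle _ hl.2
    omega
  have hBcard : B.card = R := by
    have h1 := card_filter_add_card_filter c p m
    have h2 : (Finset.univ.filter fun v => v ≠ c ∧ m + 1 ≤ descCard p v) =
        B.image fun l => p^[m] l := by
      ext v
      simp only [Finset.mem_filter, Finset.mem_univ, true_and, Finset.mem_image, hB]
      constructor
      · rintro ⟨hv, hmv⟩
        obtain ⟨l, hl, k, rfl⟩ := h.exists_pendent_desc hv
        have hl : l ∈ A := by simpa [hA] using hl
        have h3 := h.lt_descCard_iterate k l hv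
        have h4 := hle _ hv
        have h5 : k = m := by
          by_contra hkm
          have := (hlow l hl k (by omega)).2
          omega
        subst h5
        exact ⟨l, ⟨hl, hv⟩, rfl⟩
      · rintro ⟨l, ⟨hl, hv⟩, rfl⟩
        exact ⟨hv, h.lt_descCard_iterate m l hv⟩
    rw [h2, Finset.card_image_of_injOn hBinj, hcard, hn] at h1
    omega
  obtain ⟨e, he⟩ : ∃ e : Fin q ≃ A, ∀ t, t.val < R ↔ (e t).1 ∈ B := by
    have e0 : Fin q ≃ A := Fintype.equivOfCardEq (by simp [hq])
    have hc : Fintype.card {t : Fin q // t.val < R} =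
        Fintype.card {t : Fin q // (e0 t).1 ∈ B} := by
      rw [Fintype.card_subtype, Fintype.card_subtype]
      have h1 : (Finset.univ.filter fun t : Fin q => t.val < R).card = R := by
        rw [Fin.card_filter_val_lt]
        omega
      have h2 : (Finset.univ.filter fun t : Fin q => (e0 t).1 ∈ B).image (fun t => (e0 t).1) =
          B := by
        ext l
        simp only [Finset.mem_image, Finset.mem_filter, Finset.mem_univ, true_and]
        constructor
        · rintro ⟨t, ht, rfl⟩
          exact ht
        · intro hl
          have hl' : l ∈ A := (Finset.mem_filter.1 hl).1
          exact ⟨e0.symm ⟨l, hl'⟩, by simpa using hl, by simp⟩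
      have h3 : (Finset.univ.filter fun t : Fin q => (e0 t).1 ∈ B).card = B.card := by
        conv_rhs => rw [← h2]
        exact (Finset.card_image_of_injective _
          (Subtype.val_injective.comp e0.injective)).symm
      rw [h1, h3, hBcard]
    let s := (Fintype.equivOfCardEq hc).extendSubtype
    refine ⟨s.trans e0, fun t => ?_⟩
    by_cases ht : t.val < R
    · exact iff_of_true ht ((Fintype.equivOfCardEq hc).extendSubtype_mem t ht)
    · exact iff_of_false ht ((Fintype.equivOfCardEq hc).extendSubtype_not_mem t ht)
  refine ⟨fun t => (e t).1, ?_, fun t => htop _, ?_⟩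
  · intro v hv
    obtain ⟨l, hl, k, rfl⟩ := h.exists_pendent_desc hv
    have hl : l ∈ A := by simpa [hA] using hl
    refine ⟨e.symm ⟨l, hl⟩, k, ?_, by simp⟩
    have h3 := h.lt_descCard_iterate k l hv
    have h4 := hle _ hv
    rcases Nat.lt_or_ge k m with hk | hk
    · have h5 : (k + 1) * q ≤ m * q := Nat.mul_le_mul_right q hk
      have h6 := (e.symm ⟨l, hl⟩).isLt
      rw [Nat.add_mul] at h5
      omega
    · obtain rfl : k = m := by omega
      have : (e.symm ⟨l, hl⟩).val < R := (he _).2 (by simp [hB, hl, hv])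
      omega
  · intro t ht
    by_contra hne
    have := (he t).2 (by simp [hB, hne])
    omega

theorem r_eq_of_iso {G : SimpleGraph V} [Fintype W] {H : SimpleGraph W} {c : W} {p : W → W}
    {d : W → ℕ} (h : Rooted H c p d) (hs : ∀ v, v ≠ c → 2 * descCard p v ≤ Fintype.card W)
    (φ : G ≃g H) (i : ℕ) : r G i = r H i := by
  have aux : ∀ x, x ≠ φ.symm c ↔ φ x ≠ c := fun x => by
    rw [Ne, Ne, not_iff_not]
    constructor
    · rintro rfl; simp
    · rintro rfl; simp
  have h' : Rooted G (φ.symm c) (fun v => φ.symm (p (φ v))) (fun v => d (φ v)) := by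
    refine ⟨by simp [h.root], fun v hv => by simpa using h.depth _ ((aux v).1 hv), ?_⟩
    intro x y
    rw [← φ.map_adj_iff, h.adj, aux, aux]
    have : ∀ x y, x = φ.symm y ↔ φ x = y := fun x y => by
      constructor
      · rintro rfl; simp
      · rintro rfl; simp
    simp [this]
  have hsemi : ∀ k v, φ ((fun v => φ.symm (p (φ v)))^[k] v) = p^[k] (φ v) := by
    intro k v
    induction k with
    | zero => rfl
    | succ k ih => rw [Function.iterate_succ_apply', Function.iterate_succ_apply', ← ih]; simp
  have hd : ∀ v, descCard (fun v => φ.symm (p (φ v))) v = descCard p (φ v) := by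
    intro v
    unfold descCard
    refine Finset.card_equiv φ.toEquiv fun w => ?_
    simp only [Finset.mem_filter, Finset.mem_univ, true_and]
    refine exists_congr fun k => ?_
    rw [← φ.injective.eq_iff, hsemi]
    rfl
  have hcV : Fintype.card V = Fintype.card W := Fintype.card_congr φ.toEquiv
  rw [h.r_eq hs, h'.r_eq (fun v hv => by rw [hd, hcV]; exact hs _ ((aux v).1 hv))]
  refine Finset.card_equiv φ.toEquiv fun w => ?_
  simp only [Finset.mem_filter, Finset.mem_univ, true_and, aux, hd]
  rfl

end Rooted

/-- Two rooted trees with conjugate parent functions are isomorphic. -/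
theorem Rooted.nonempty_iso {G : SimpleGraph V} {c : V} {p : V → V} {d : V → ℕ}
    {H : SimpleGraph W} {c' : W} {p' : W → W} {d' : W → ℕ} (h : Rooted G c p d)
    (h' : Rooted H c' p' d') (e : V ≃ W) (hc : e c = c') (hp : ∀ v, e (p v) = p' (e v)) :
    Nonempty (G ≃g H) := by
  refine ⟨e, ?_⟩
  intro x y
  rw [h.adj, h'.adj, ← hc, ← hp, ← hp]
  simp

/-- The parent function of the balanced starlike tree. -/
def starParent (n q : ℕ) (j : Fin n) : Fin n :=
  ⟨if j.val ≤ q then 0 else j.val - q, by have := j.isLt; split_ifs <;> omega⟩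

theorem balancedStar_rooted {n q : ℕ} (hn : 0 < n) (hq : 0 < q) :
    Rooted (balancedStar n q) ⟨0, hn⟩ (starParent n q) Fin.val := by
  refine ⟨by simp [starParent], ?_, ?_⟩
  · intro v hv
    have : v.val ≠ 0 := fun e => hv (Fin.ext e)
    simp only [starParent]
    split_ifs <;> omega
  · intro x y
    simp only [balancedStar, SimpleGraph.fromRel_adj, starParent, Ne, Fin.ext_iff]
    split_ifs <;> omega

theorem descCard_starParent {n q : ℕ} (hq : 0 < q) (j : Fin n) (hj : j.val ≠ 0) :
    descCard (starParent n q) j = (n - 1 - j.val) / q + 1 := by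
  have hiter : ∀ k (w : Fin n), (starParent n q)^[k] w = j ↔ w.val = j.val + k * q := by
    intro k
    induction k with
    | zero => intro w; simp [Fin.ext_iff]
    | succ k ih =>
      intro w
      rw [Function.iterate_succ_apply, ih, Nat.succ_mul]
      simp only [starParent]
      split_ifs <;> omega
  have hlt : ∀ k, k < (n - 1 - j.val) / q + 1 ↔ j.val + k * q < n := by
    intro k
    have := j.isLt
    rw [Nat.lt_succ_iff, Nat.le_div_iff_mul_le hq]
    omega
  unfold descCard
  simp only [hiter]
  rw [← Finset.card_range ((n - 1 - j.val) / q + 1)]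
  symm
  refine Finset.card_bij (fun k hk => ⟨j.val + k * q, (hlt k).1 (Finset.mem_range.1 hk)⟩) ?_ ?_ ?_
  · intro k _
    simp
  · intro k _ k' _ hkk
    simp only [Fin.mk.injEq, Nat.add_left_cancel_iff] at hkk
    exact Nat.eq_of_mul_eq_mul_right hq hkk
  · intro w hw
    simp only [Finset.mem_filter, Finset.mem_univ, true_and] at hw
    obtain ⟨k, hk⟩ := hw
    exact ⟨k, Finset.mem_range.2 ((hlt k).2 (hk ▸ w.isLt)), Fin.ext hk.symm⟩

theorem two_mul_descCard_starParent_le {n q : ℕ} (hq : 2 < q) (j : Fin n)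
    (hj : j.val ≠ 0) : 2 * descCard (starParent n q) j ≤ n := by
  rw [descCard_starParent (by omega) j hj]
  have h1 : (n - 1 - j.val) / q ≤ (n - 1 - j.val) / 3 := Nat.div_le_div_left hq (by omega)
  omega

theorem card_filter_starParent {n q : ℕ} (hn : 0 < n) (hq : 0 < q) (m : ℕ) :
    (Finset.univ.filter fun j : Fin n =>
      j ≠ ⟨0, hn⟩ ∧ m + 1 ≤ descCard (starParent n q) j).card = n - 1 - m * q := by
  trans (Finset.Icc 1 (n - 1 - m * q)).card
  · refine Finset.card_bij (fun j _ => j.val) ?_ ?_ ?_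
    · intro j hj
      simp only [Finset.mem_filter, Finset.mem_univ, true_and, Ne, Fin.ext_iff] at hj
      rw [descCard_starParent hq j hj.1, Nat.add_le_add_iff_right,
        Nat.le_div_iff_mul_le hq] at hj
      have := j.isLt
      rw [Finset.mem_Icc]
      omega
    · exact fun _ _ _ _ e => Fin.ext e
    · intro j hj
      rw [Finset.mem_Icc] at hj
      refine ⟨⟨j, by omega⟩, ?_, rfl⟩
      simp only [Finset.mem_filter, Finset.mem_univ, true_and, Ne, Fin.ext_iff]
      rw [descCard_starParent hq _ (by simp only; omega), Nat.add_le_add_iff_right,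
        Nat.le_div_iff_mul_le hq]
      simp only
      omega
  · simp

/-- A rooted tree parametrised by `q` chains as in `Rooted.exists_parametrization` is a
balanced starlike tree. -/
theorem Rooted.nonempty_iso_balancedStar [Fintype V] {G : SimpleGraph V} {c : V} {p : V → V}
    {d : V → ℕ} (h : Rooted G c p d) {q m R : ℕ} (hm : 0 < m)
    (hn : Fintype.card V = m * q + R + 1) (hR : R < q) (L : Fin q → V)
    (hsurj : ∀ v, v ≠ c → ∃ t k, k * q + t.val < m * q + R ∧ p^[k] (L t) = v)
    (htop : ∀ t, p^[m + 1] (L t) = c) (htop' : ∀ t, R ≤ t.val → p^[m] (L t) = c) :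
    Nonempty (G ≃g balancedStar (Fintype.card V) q) := by
  have hq : 0 < q := by omega
  have hn0 : 0 < Fintype.card V := by omega
  let f : Fin (Fintype.card V) → V := fun j =>
    if j.val = 0 then c
    else p^[(m * q + R - j.val) / q] (L ⟨(m * q + R - j.val) % q, Nat.mod_lt _ hq⟩)
  have hf0 : f ⟨0, hn0⟩ = c := by simp [f]
  have hfsurj : Function.Surjective f := by
    intro v
    by_cases hv : v = c
    · exact ⟨⟨0, hn0⟩, hf0.trans hv.symm⟩
    · obtain ⟨t, k, hk, rfl⟩ := hsurj v hv
      refine ⟨⟨m * q + R - (k * q + t.val), by omega⟩, ?_⟩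
      have h1 : m * q + R - (m * q + R - (k * q + t.val)) = t.val + q * k := by
        rw [mul_comm q k]; omega
      have h2 : ¬ m * q + R - (k * q + t.val) = 0 := by omega
      simp only [f, if_neg h2, h1, Nat.add_mul_div_left _ _ hq, Nat.div_eq_of_lt t.isLt,
        Nat.add_mul_mod_self_left, Nat.mod_eq_of_lt t.isLt, Nat.zero_add]
  have hfp : ∀ j, f (starParent _ q j) = p (f j) := by
    intro j
    by_cases hj : j.val = 0
    · simp [f, starParent, hj, h.root]
    · have hjn := j.isLt
      by_cases hjq : j.val ≤ q
      · have hd := Nat.div_add_mod (m * q + R - j.val) q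
        have hmod := Nat.mod_lt (m * q + R - j.val) hq
        simp only [f, starParent, hj, hjq, if_true, if_false, ← Function.iterate_succ_apply' p]
        symm
        have hk1 : (m * q + R - j.val) / q ≤ m := by
          rw [Nat.div_le_iff_le_mul_add_pred hq, mul_comm q m]; omega
        have hk2 : m - 1 ≤ (m * q + R - j.val) / q := by
          rw [Nat.le_div_iff_mul_le hq, Nat.sub_mul]; omega
        rcases Nat.lt_or_ge ((m * q + R - j.val) / q) m with hlt | hge
        · have hk : (m * q + R - j.val) / q + 1 = m := by omega
          rw [Nat.succ_eq_add_one, hk]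
          apply htop'
          have : q * ((m * q + R - j.val) / q + 1) = m * q := by rw [hk, mul_comm]
          rw [Nat.mul_add] at this
          simp only
          omega
        · have hk : (m * q + R - j.val) / q = m := by omega
          rw [hk]
          exact htop _
      · have h1 : ¬ j.val - q = 0 := by omega
        have h2 : m * q + R - (j.val - q) = m * q + R - j.val + q := by omega
        simp only [f, starParent, hj, hjq, if_false, h1, h2, Nat.add_div_right _ hq,
          Nat.add_mod_right, ← Function.iterate_succ_apply' p]
  have hbij : Function.Bijective f :=
    (Fintype.bijective_iff_surjective_and_card f).2 ⟨hfsurj, by simp⟩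
  obtain ⟨φ⟩ := Rooted.nonempty_iso (balancedStar_rooted hn0 hq) h (Equiv.ofBijective f hbij)
    hf0 hfp
  exact ⟨φ.symm⟩

/-- Let `T` be a tree on `n` vertices with exactly `q` pendent vertices,
`2 < q < n − 1`. Then `T ⪰ SP_{n,q}`, and `r(T) = r(SP_{n,q})` iff `T` is isomorphic to
`SP_{n,q}`. -/
theorem stmt17 {V : Type*} [Fintype V] (G : SimpleGraph V) (hT : G.IsTree) (q : ℕ)
    (hq : (Finset.univ.filter fun v => deg G v = 1).card = q)
    (hq2 : 2 < q) (hqn : q < Fintype.card V - 1) :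
    Preceq (Fintype.card V) (balancedStar (Fintype.card V) q) G ∧
    (SameEdgeDivision (Fintype.card V) G (balancedStar (Fintype.card V) q) ↔
      Nonempty (G ≃g balancedStar (Fintype.card V) q)) := by

  obtain ⟨c, p, d, h, hs⟩ := exists_centroidal_rooted hT
  have hn0 : 0 < Fintype.card V := by omega
  have hq0 : 0 < q := by omega
  have hS := balancedStar_rooted hn0 hq0
  have hSs : ∀ j, j ≠ ⟨0, hn0⟩ →
      2 * descCard (starParent (Fintype.card V) q) j ≤ Fintype.card (Fin (Fintype.card V)) := by
    intro j hj
    rw [Fintype.card_fin]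
    exact two_mul_descCard_starParent_le hq2 j fun e => hj (Fin.ext e)
  have htG := h.tailSum_eq hs
  have htS : ∀ m, tailSum (balancedStar (Fintype.card V) q) (Fintype.card V) (m + 1) =
      Fintype.card V - 1 - m * q := by
    intro m
    have := hS.tailSum_eq hSs (m + 1)
    rw [Fintype.card_fin] at this
    rw [this, ← card_filter_starParent hn0 hq0 m]
    congr!
  refine ⟨?_, ?_, ?_⟩
  · intro k hk _
    obtain ⟨m, rfl⟩ : ∃ m, k = m + 1 := ⟨k - 1, by omega⟩
    rw [htG, htS]
    have h1 := h.card_filter_le m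
    have h2 := Rooted.card_filter_add_card_filter c p m
    rw [hq, mul_comm] at h1
    omega
  · intro hr
    have htail : ∀ m, (Finset.univ.filter fun v => v ≠ c ∧ m + 1 ≤ descCard p v).card =
        Fintype.card V - 1 - m * q := by
      intro m
      rw [← htG, ← htS]
      refine Finset.sum_congr rfl fun i hi => ?_
      rw [Finset.mem_Icc] at hi
      exact hr i (by omega) hi.2
    obtain ⟨m, R, hn, hR, hm⟩ : ∃ m R, Fintype.card V = m * q + R + 1 ∧ R < q ∧ 0 < m := by
      refine ⟨(Fintype.card V - 1) / q, (Fintype.card V - 1) % q, ?_, Nat.mod_lt _ hq0,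
        Nat.div_pos (by omega) hq0⟩
      have := Nat.div_add_mod (Fintype.card V - 1) q
      rw [mul_comm] at this
      omega
    have hcard : (Finset.univ.filter fun v => v ≠ c ∧ descCard p v ≤ m).card = m * q := by
      have h1 := htail m
      have h2 := Rooted.card_filter_add_card_filter c p m
      omega
    have hle : ∀ v, v ≠ c → descCard p v ≤ m + 1 := by
      intro v hv
      have h1 := htail (m + 1)
      rw [Nat.sub_eq_zero_of_le (by rw [Nat.add_mul]; omega), Finset.card_eq_zero] at h1
      by_contra hlt
      have : v ∈ Finset.univ.filter fun v => v ≠ c ∧ m + 1 + 1 ≤ descCard p v := by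
        simp only [Finset.mem_filter, Finset.mem_univ, true_and]
        exact ⟨hv, by omega⟩
      rw [h1] at this
      exact Finset.notMem_empty v this
    obtain ⟨L, h1, h2, h3⟩ := h.exists_parametrization hq hm hn hR hcard hle
    exact h.nonempty_iso_balancedStar hm hn hR L h1 h2 h3
  · rintro ⟨φ⟩ i _ _
    exact hS.r_eq_of_iso hSs φ i

end TreeOrder
end
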